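/- Let U be an N × N random unitary matrix distributed according to Haar measure on U(N). For every θ ∈ [0, 2π], the variance of the eigenvalue counting function satisfies Var(𝒩_θ) ≤ log(eN). -/

import Mathlib

open MeasureTheory Real Filter

noncomputable section

/-- The Borel σ-algebra on the unitary group `U(N)`. -/
instance (N : ℕ) : MeasurableSpace (Matrix.unitaryGroup (Fin N) ℂ) := borel _

instance (N : ℕ) : BorelSpace (Matrix.unitaryGroup (Fin N) ℂ) := ⟨rfl⟩

/-- The eigenvalue angles (in `[0, 2π)`, with multiplicity) of a unitary matrix `U`:
the arguments of the roots of the characteristic polynomial, shifted to lie in `[0, 2π)`. -/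
def eigenAngles (N : ℕ) (U : Matrix.unitaryGroup (Fin N) ℂ) : Multiset ℝ :=
  ((U : Matrix (Fin N) (Fin N) ℂ).charpoly.roots).map
    (fun z => if 0 ≤ Complex.arg z then Complex.arg z else Complex.arg z + 2 * π)

open Classical in
/-- `𝒩_A`: the number of eigenvalue angles of `U` lying in the set `A`. -/
def countAngles (N : ℕ) (U : Matrix.unitaryGroup (Fin N) ℂ) (A : Set ℝ) : ℕ :=
  Multiset.card ((eigenAngles N U).filter (· ∈ A))

/-- `𝒩_θ`: the number of eigenvalue angles of `U` in `[0, θ]`. -/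
def countFun (N : ℕ) (U : Matrix.unitaryGroup (Fin N) ℂ) (θ : ℝ) : ℕ :=
  countAngles N U (Set.Icc 0 θ)

/-- The Kolmogorov distance between the empirical spectral measure of `U` and the
uniform measure on the circle: `sup_{0 ≤ θ < 2π} |𝒩_θ/N - θ/(2π)|`. -/
def dK (N : ℕ) (U : Matrix.unitaryGroup (Fin N) ℂ) : ℝ :=
  ⨆ θ : Set.Ico (0:ℝ) (2 * π), |(countFun N U θ : ℝ) / N - (θ : ℝ) / (2 * π)|

/-- `max_{1 ≤ k ≤ N} |𝒩_{2πk/N} - k|`. -/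
def maxDev (N : ℕ) (U : Matrix.unitaryGroup (Fin N) ℂ) : ℝ :=
  ⨆ k : (Finset.Icc 1 N : Finset ℕ), |(countFun N U (2 * π * (k : ℕ) / N) : ℝ) - ((k : ℕ) : ℝ)|

end

namespace CUE
open Matrix

/-- Faddeev LeVerrier type recursion. -/
noncomputable def FL {N : ℕ} (ε : ℂ) (M : Matrix (Fin N) (Fin N) ℂ) : ℕ → Matrix (Fin N) (Fin N) ℂ × ℂ
  | 0 => (0, 1)
  | n + 1 => (M * ((FL ε M n).1 + (FL ε M n).2 • 1),
      ε / ((n : ℂ) + 1) * Matrix.trace (M * ((FL ε M n).1 + (FL ε M n).2 • 1)))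

noncomputable def bb {N : ℕ} (ε : ℂ) (n : ℕ) (M : Matrix (Fin N) (Fin N) ℂ) : Matrix (Fin N) (Fin N) ℂ := (FL ε M n).1
noncomputable def yy {N : ℕ} (ε : ℂ) (n : ℕ) (M : Matrix (Fin N) (Fin N) ℂ) : ℂ := (FL ε M n).2
noncomputable def pp {N : ℕ} (k : ℕ) (M : Matrix (Fin N) (Fin N) ℂ) : ℂ := Matrix.trace (M ^ k)

variable {N : ℕ} (ε : ℂ) (M : Matrix (Fin N) (Fin N) ℂ)

lemma bb_zero : bb ε 0 M = 0 := rfl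
lemma yy_zero : yy ε 0 M = 1 := rfl
lemma bb_succ (n : ℕ) : bb ε (n+1) M = M * (bb ε n M + yy ε n M • 1) := rfl
lemma bb_succ' (n : ℕ) : bb ε (n+1) M = M * bb ε n M + yy ε n M • M := by
  rw [bb_succ, mul_add]; simp
lemma yy_succ (n : ℕ) : yy ε (n+1) M = ε / ((n : ℂ) + 1) * Matrix.trace (bb ε (n+1) M) := rfl

lemma bb_comm (n : ℕ) : M * bb ε n M = bb ε n M * M := by
  induction n with
  | zero => simp [bb_zero]
  | succ n ih =>
    rw [bb_succ']
    simp only [mul_add, add_mul, ih, Matrix.mul_smul, Matrix.smul_mul, ← mul_assoc]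

lemma nyy (n : ℕ) : (n : ℂ) * yy ε n M = ε * Matrix.trace (bb ε n M) := by
  cases n with
  | zero => simp [bb_zero]
  | succ n =>
    rw [yy_succ]
    have : (n : ℂ) + 1 ≠ 0 := Nat.cast_add_one_ne_zero n
    push_cast
    field_simp

lemma bb_eq_sum (n : ℕ) : bb ε n M = ∑ k ∈ Finset.range n, yy ε k M • M ^ (n - k) := by
  induction n with
  | zero => simp [bb_zero]
  | succ n ih =>
    rw [bb_succ', ih, Finset.sum_range_succ, Finset.mul_sum]
    congr 1
    · refine Finset.sum_congr rfl fun k hk => ?_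
      have : n + 1 - k = (n - k) + 1 := by have := Finset.mem_range.1 hk; omega
      rw [this, pow_succ', Matrix.mul_smul]
    · simp

lemma trace_bb (n : ℕ) : Matrix.trace (bb ε n M) = ∑ k ∈ Finset.range n, yy ε k M * pp (n - k) M := by
  rw [bb_eq_sum, Matrix.trace_sum]; simp [pp]

/-- key matrix identity -/
lemma bb_key (hε : ε * ε = 1) (n : ℕ) :
    ∑ k ∈ Finset.range n, bb ε (k+1) M * M ^ (n - 1 - k)
      + ε • ∑ k ∈ Finset.range n, pp (n - k) M • bb ε k M = (n : ℂ) • bb ε n M := by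
  induction n with
  | zero => simp
  | succ n ih =>
    have e1 : ∑ k ∈ Finset.range (n+1), bb ε (k+1) M * M ^ (n + 1 - 1 - k)
       = M * (∑ k ∈ Finset.range n, bb ε (k+1) M * M ^ (n - 1 - k)) + bb ε (n+1) M := by
      rw [Finset.sum_range_succ, Finset.mul_sum]
      congr 1
      · refine Finset.sum_congr rfl fun k hk => ?_
        have : n + 1 - 1 - k = (n - 1 - k) + 1 := by have := Finset.mem_range.1 hk; omega
        rw [this, pow_succ', ← mul_assoc, ← mul_assoc, bb_comm]
      · simp
    have e2 : ∑ k ∈ Finset.range (n+1), pp (n + 1 - k) M • bb ε k M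
       = M * (∑ k ∈ Finset.range n, pp (n - k) M • bb ε k M) + (∑ k ∈ Finset.range n, yy ε k M * pp (n - k) M) • M := by
      rw [Finset.sum_range_succ', bb_zero, smul_zero, add_zero, Finset.mul_sum, Finset.sum_smul,
        ← Finset.sum_add_distrib]
      refine Finset.sum_congr rfl fun k hk => ?_
      rw [Nat.add_sub_add_right, bb_succ', smul_add, smul_smul, mul_comm (yy ε k M), Matrix.mul_smul]
    rw [e1, e2, ← trace_bb, smul_add, smul_smul, ← nyy, bb_succ' ε M n]
    have := congrArg (M * ·) ih
    simp only [mul_add, Matrix.mul_smul] at this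
    have h2 : M * ∑ k ∈ Finset.range n, bb ε (k + 1) M * M ^ (n - 1 - k) =
      (n:ℂ) • (M * bb ε n M) - ε • M * ∑ k ∈ Finset.range n, pp (n - k) M • bb ε k M := by
      rw [← this]; simp
    rw [h2]
    push_cast
    simp only [Matrix.smul_mul]
    module

/-- trace of the cross products -/
lemma cross (r s : ℕ) :
    Matrix.trace (bb (-1) (r+1) M * bb 1 s M) - Matrix.trace (bb (-1) r M * bb 1 (s+1) M)
      = ((s:ℂ)+1) * (yy (-1) r M * yy 1 (s+1) M) + ((r:ℂ)+1) * (yy (-1) (r+1) M * yy 1 s M) := by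
  have h1 := nyy 1 M (s+1)
  have h2 := nyy (-1) M (r+1)
  have h3 : bb (-1) (r+1) M * bb 1 s M - bb (-1) r M * bb 1 (s+1) M
      = yy (-1) r M • bb 1 (s+1) M - yy 1 s M • bb (-1) (r+1) M := by
    simp only [bb_succ', smul_add, smul_smul, add_mul, mul_add, Matrix.smul_mul, Matrix.mul_smul]
    rw [← mul_assoc (bb (-1) r M), ← bb_comm (-1) M r, mul_comm (yy 1 s M) (yy (-1) r M)]
    abel
  rw [← Matrix.trace_sub, h3, Matrix.trace_sub, Matrix.trace_smul, Matrix.trace_smul]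
  push_cast at h1 h2
  simp only [smul_eq_mul]
  linear_combination (-yy (-1) r M) * h1 - yy 1 s M * h2

noncomputable def cc (m j : ℕ) (M : Matrix (Fin N) (Fin N) ℂ) : ℂ := yy (-1) j M * yy 1 (m - j) M
noncomputable def SS (m r : ℕ) (M : Matrix (Fin N) (Fin N) ℂ) : ℂ := ∑ j ∈ Finset.range (r+1), cc m j M

lemma SS_succ (m r : ℕ) : SS m (r+1) M = SS m r M + cc m (r+1) M := by
  simp [SS, Finset.sum_range_succ]
lemma SS_zero (m : ℕ) : SS m 0 M = cc m 0 M := by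
  simp [SS]

lemma Gam (m r : ℕ) (hr : r ≤ m) :
    Matrix.trace (bb (-1) r M * bb 1 (m - r) M) = m * SS m r M - ((m:ℂ) - r) * cc m r M := by
  induction r with
  | zero => simp [bb_zero, SS_zero]
  | succ r ih =>
    have := cross M r (m - (r+1))
    have h4 : m - (r+1) + 1 = m - r := by omega
    have h5 : ((m - (r+1) : ℕ) : ℂ) + 1 = (m:ℂ) - r := by
      have : ((m - (r+1) + 1 : ℕ) : ℂ) = ((m - r : ℕ) : ℂ) := by rw [h4]
      push_cast [Nat.cast_sub (show r ≤ m by omega)] at this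
      exact this
    rw [h4, h5, ih (by omega)] at this
    rw [SS_succ]
    unfold cc at *
    push_cast
    linear_combination this

lemma SS_self (m : ℕ) (hm : 1 ≤ m) : SS m m M = 0 := by
  have := Gam M m m le_rfl
  simp [bb_zero] at this
  rcases this with h | h
  · omega
  · exact h

lemma Qsum (m : ℕ) : ∑ j ∈ Finset.range (m+2), yy (-1) j M • bb 1 (m + 1 - j) M = M ^ (m+1) := by
  have step : ∀ m, ∑ j ∈ Finset.range (m+2), yy (-1) j M • bb 1 (m + 1 - j) M
      = M * ∑ j ∈ Finset.range (m+1), yy (-1) j M • bb 1 (m - j) M + SS m m M • M := by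
    intro m
    rw [Finset.sum_range_succ, SS, Finset.mul_sum, Finset.sum_smul, ← Finset.sum_add_distrib]
    simp only [Nat.sub_self, bb_zero, smul_zero, add_zero]
    refine Finset.sum_congr rfl fun k hk => ?_
    have : m + 1 - k = (m - k) + 1 := by have := Finset.mem_range.1 hk; omega
    rw [this, bb_succ', cc, smul_add, Matrix.mul_smul, smul_smul]
  induction m with
  | zero => rw [step]; simp [bb_zero, SS_zero, cc, yy_zero]
  | succ m ih => rw [step, ih, SS_self _ _ (by omega)]; simp [pow_succ']

lemma pp_eq_sum (m : ℕ) (hm : 1 ≤ m) : pp m M = ∑ r ∈ Finset.range m, SS m r M := by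
  obtain ⟨m, rfl⟩ : ∃ k, m = k + 1 := ⟨m - 1, by omega⟩
  have h1 : ∀ n, ∑ r ∈ Finset.range n, SS (m+1) r M = ∑ j ∈ Finset.range n, ((n : ℂ) - j) * cc (m+1) j M := by
    intro n
    induction n with
    | zero => simp
    | succ n ih =>
      rw [Finset.sum_range_succ, ih, Finset.sum_range_succ, SS, Finset.sum_range_succ, ← add_assoc, ← Finset.sum_add_distrib]
      push_cast
      congr 1
      · exact Finset.sum_congr rfl fun k hk => by ring
      · ring
  rw [h1, pp, ← Qsum, Matrix.trace_sum, Finset.sum_range_succ]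
  simp only [Nat.sub_self, bb_zero, smul_zero, Matrix.trace_zero, add_zero]
  refine Finset.sum_congr rfl fun k hk => ?_
  have hk := Finset.mem_range.1 hk
  have := nyy 1 M (m + 1 - k)
  rw [one_mul, Nat.cast_sub (by omega)] at this
  rw [Matrix.trace_smul, ← this, cc, smul_eq_mul]
  ring

lemma sum_flip (p : ℕ → ℂ) (n : ℕ) (y : ℕ → ℂ) :
    ∑ k ∈ Finset.range n, ∑ l ∈ Finset.range k, y l * (p (k - l) * p (n - k))
     = ∑ j ∈ Finset.range n, y j * ∑ l ∈ Finset.range (n - j - 1), p (l+1) * p (n - j - (l+1)) := by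
  simp only [Finset.mul_sum]
  rw [Finset.sum_sigma', Finset.sum_sigma']
  refine Finset.sum_bij' (fun a _ => ⟨a.2, a.1 - a.2 - 1⟩) (fun a _ => ⟨a.1 + a.2 + 1, a.1⟩) ?_ ?_ ?_ ?_ ?_
  · rintro ⟨k, l⟩ h; simp at h ⊢; omega
  · rintro ⟨k, l⟩ h; simp at h ⊢; omega
  · rintro ⟨k, l⟩ h; simp at h ⊢; omega
  · rintro ⟨k, l⟩ h; simp at h ⊢; omega
  · rintro ⟨k, l⟩ h
    simp only [Finset.mem_sigma, Finset.mem_range] at h ⊢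
    have e1 : k - l - 1 + 1 = k - l := by omega
    have e2 : n - l - (k - l - 1 + 1) = n - k := by omega
    rw [e2, e1]

/-- divergence of `bb`. -/
lemma div_bb (hε : ε * ε = 1) (n : ℕ) :
    ∑ k ∈ Finset.range n, (ε * Matrix.trace (bb ε k M * M ^ (n - k))
      + yy ε k M * ∑ l ∈ Finset.range (n - k), pp l M * pp (n - k - l) M)
      = (N + ε * ((n:ℂ) - 1)) * Matrix.trace (bb ε n M) := by
  cases n with
  | zero => simp [bb_zero]
  | succ n =>
  have key := bb_key ε M hε n
  -- first part
  have e1 : ∑ k ∈ Finset.range (n+1), bb ε k M * M ^ (n + 1 - k)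
      = M * ∑ k ∈ Finset.range n, bb ε (k+1) M * M ^ (n - 1 - k) := by
    rw [Finset.sum_range_succ', bb_zero, zero_mul, add_zero, Finset.mul_sum]
    refine Finset.sum_congr rfl fun k hk => ?_
    have : n + 1 - (k+1) = (n - 1 - k) + 1 := by have := Finset.mem_range.1 hk; omega
    rw [this, pow_succ', ← mul_assoc, ← mul_assoc, bb_comm]
  have e2 : ∑ k ∈ Finset.range (n+1), pp (n + 1 - k) M • bb ε k M
       = M * (∑ k ∈ Finset.range n, pp (n - k) M • bb ε k M) + (∑ k ∈ Finset.range n, yy ε k M * pp (n - k) M) • M := by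
      rw [Finset.sum_range_succ', bb_zero, smul_zero, add_zero, Finset.mul_sum, Finset.sum_smul,
        ← Finset.sum_add_distrib]
      refine Finset.sum_congr rfl fun k hk => ?_
      rw [Nat.add_sub_add_right, bb_succ', smul_add, smul_smul, mul_comm (yy ε k M), Matrix.mul_smul]
  have e3 : ∑ k ∈ Finset.range (n+1), bb ε k M * M ^ (n + 1 - k)
      = (n:ℂ) • bb ε (n+1) M - ε • ∑ k ∈ Finset.range (n+1), pp (n + 1 - k) M • bb ε k M := by
    have := congrArg (M * ·) key
    simp only [mul_add, Matrix.mul_smul] at this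
    rw [e1, e2, bb_succ', ← trace_bb, smul_add, smul_add, ← this, smul_smul, smul_smul, nyy]
    abel
  have e4 := congrArg Matrix.trace e3
  rw [Matrix.trace_sum, Matrix.trace_sub, Matrix.trace_smul, Matrix.trace_smul, Matrix.trace_sum] at e4
  simp only [Matrix.trace_smul, smul_eq_mul] at e4
  rw [Finset.sum_add_distrib, ← Finset.mul_sum, e4]
  have e5 : ∑ k ∈ Finset.range (n+1), yy ε k M * ∑ l ∈ Finset.range (n + 1 - k), pp l M * pp (n + 1 - k - l) M
     = N * Matrix.trace (bb ε (n+1) M) + ∑ k ∈ Finset.range (n+1), pp (n+1-k) M * Matrix.trace (bb ε k M) := by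
    have := sum_flip (fun k => pp k M) (n+1) (fun k => yy ε k M)
    have h6 : ∑ k ∈ Finset.range (n+1), pp (n+1-k) M * Matrix.trace (bb ε k M) =
      ∑ k ∈ Finset.range (n+1), ∑ l ∈ Finset.range k, yy ε l M * (pp (k - l) M * pp (n +1 - k) M) := by
      refine Finset.sum_congr rfl fun k hk => ?_
      rw [trace_bb, Finset.mul_sum]
      exact Finset.sum_congr rfl fun k hk => by ring
    rw [h6, this, trace_bb, Finset.mul_sum, ← Finset.sum_add_distrib]
    refine Finset.sum_congr rfl fun k hk => ?_
    have hk := Finset.mem_range.1 hk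
    obtain ⟨q, hq⟩ : ∃ q, n + 1 - k = q + 1 := ⟨n - k, by omega⟩
    rw [hq, Finset.sum_range_succ']
    simp only [pp, Nat.add_sub_cancel, Nat.sub_zero, pow_zero, Matrix.trace_one, Fintype.card_fin]
    ring
  rw [e5]
  push_cast
  linear_combination (-∑ k ∈ Finset.range (n+1), pp (n+1-k) M * Matrix.trace (bb ε k M)) * hε

end CUE

namespace CUE
open Matrix
variable {N : ℕ} (M : Matrix (Fin N) (Fin N) ℂ)
open Polynomial in
lemma charpoly_eq_prod_roots : M.charpoly = (M.charpoly.roots.map (fun z => X - C z)).prod := by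
  exact (IsAlgClosed.splits M.charpoly).eq_prod_roots_of_monic M.charpoly_monic

lemma card_roots : Multiset.card M.charpoly.roots = N := by
  have := (IsAlgClosed.splits M.charpoly).natDegree_eq_card_roots
  rw [← this, Matrix.charpoly_natDegree_eq_dim]; simp

open Polynomial in
lemma det_sub (μ : ℂ) : (aeval M (X - C μ)).det = (M.charpoly.roots.map (fun z => eval z (X - C μ))).prod := by
  have h : eval μ M.charpoly = (M.charpoly.roots.map (fun z => μ - z)).prod := by
    conv_lhs => rw [charpoly_eq_prod_roots M]
    rw [Polynomial.eval_multiset_prod, Multiset.map_map]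
    simp
  rw [Matrix.eval_charpoly] at h
  have h2 : aeval M (X - C μ) = -(Matrix.scalar (Fin N) μ - M) := by
    simp [Matrix.algebraMap_eq_diagonal, Pi.algebraMap_def]
  rw [h2, Matrix.det_neg, h]
  simp only [Fintype.card_fin, eval_sub, eval_X, eval_C]
  have : (fun z : ℂ => z - μ) = fun z => (-1) * (μ - z) := by ext; ring
  rw [this, Multiset.prod_map_mul]
  simp [card_roots]

open Polynomial in
lemma det_aeval (q : ℂ[X]) : (aeval M q).det = (M.charpoly.roots.map (fun z => eval z q)).prod := by
  have hq : ∀ s : Multiset ℂ, (aeval M (s.map (fun a => X - C a)).prod).det = (M.charpoly.roots.map (fun z => eval z (s.map (fun a => X - C a)).prod)).prod := by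
    intro s
    induction s using Multiset.induction_on with
    | empty => simp
    | cons a s ih =>
      simp only [Multiset.map_cons, Multiset.prod_cons, map_mul, Matrix.det_mul, ih, det_sub, eval_mul, Multiset.prod_map_mul]
  rw [(IsAlgClosed.splits q).eq_prod_roots]
  simp only [map_mul, Matrix.det_mul, hq, eval_mul, Multiset.prod_map_mul, eval_C, aeval_C]
  congr 1
  simp [Matrix.algebraMap_eq_diagonal, card_roots]

open Polynomial in
lemma charpoly_pow (k : ℕ) : (M ^ k).charpoly = ((M.charpoly.roots.map (· ^ k)).map (fun z => X - C z)).prod := by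
  apply Polynomial.funext
  intro r
  have := det_aeval M (C r - X ^ k)
  rw [Matrix.eval_charpoly, Polynomial.eval_multiset_prod, Multiset.map_map, Multiset.map_map]
  simp at this ⊢
  rw [← this]
  rfl

lemma pp_eq (k : ℕ) : pp k M = (M.charpoly.roots.map (· ^ k)).sum := by
  rw [pp, Matrix.trace_eq_sum_roots_charpoly, charpoly_pow, Polynomial.roots_multiset_prod_X_sub_C]

/-- an enumeration of the eigenvalues -/
lemma exists_enum : ∃ z : Fin N → ℂ, M.charpoly.roots = (Finset.univ.val.map z) := by
  obtain ⟨l, hl⟩ := Quot.exists_rep M.charpoly.roots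
  have hc : l.length = N := by
    have := card_roots M; rw [← hl] at this; simpa using this
  subst hc
  refine ⟨l.get, ?_⟩
  rw [← hl]
  simp

lemma yy_eq_zero (n : ℕ) (hn : N < n) : yy (-1) n M = 0 := by
  obtain ⟨z, hz⟩ := exists_enum M
  have hp : ∀ k, pp k M = MvPolynomial.aeval z (MvPolynomial.psum (Fin N) ℂ k) := by
    intro k; rw [pp_eq, hz]; simp [MvPolynomial.psum, List.sum_ofFn]
  have key : ∀ n, yy (-1) n M = (-1)^n * MvPolynomial.aeval z (MvPolynomial.esymm (Fin N) ℂ n) := by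
    intro n
    induction n using Nat.strong_induction_on with
    | _ n ih =>
    rcases Nat.eq_zero_or_pos n with rfl | hpos
    · simp [yy_zero]
    have h1 := nyy (-1) M n
    rw [trace_bb] at h1
    have h2 := congrArg (MvPolynomial.aeval z) (MvPolynomial.mul_esymm_eq_sum (Fin N) ℂ n)
    simp only [map_mul, map_natCast, map_pow, map_neg, map_one, map_sum, ← hp] at h2
    have h3 : ∑ a ∈ Finset.HasAntidiagonal.antidiagonal n with a.1 < n, (-1) ^ a.1 * MvPolynomial.aeval z (MvPolynomial.esymm (Fin N) ℂ a.1) * pp a.2 M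
       = ∑ k ∈ Finset.range n, yy (-1) k M * pp (n - k) M := by
      rw [Finset.sum_filter, Finset.Nat.sum_antidiagonal_eq_sum_range_succ_mk, Finset.sum_range_succ]
      simp only [lt_irrefl, if_false, add_zero]
      refine Finset.sum_congr rfl fun k hk => ?_
      rw [if_pos (Finset.mem_range.1 hk), ih k (Finset.mem_range.1 hk)]
    rw [h3] at h2
    have hn : (n:ℂ) ≠ 0 := by exact_mod_cast hpos.ne'
    apply mul_left_cancel₀ hn
    have h4 : ((-1:ℂ)^n) * (-1)^n = 1 := by rw [← mul_pow]; simp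
    rw [h1]
    rw [mul_left_comm, h2, pow_succ]
    linear_combination (∑ k ∈ Finset.range n, yy (-1) k M * pp (n - k) M) * h4
  rw [key, MvPolynomial.esymm, Finset.powersetCard_eq_empty.2 (by simpa using hn)]
  simp

lemma SS_eq_zero (m r : ℕ) (hm : 1 ≤ m) (hr : N ≤ r) (hrm : r ≤ m) : SS m r M = 0 := by
  rw [← SS_self M m hm, SS, SS]
  refine Finset.sum_subset (by simpa using hrm) fun j hj hj' => ?_
  simp at hj'
  rw [cc, yy_eq_zero M j (by omega), zero_mul]

lemma pp_eq_sum' (m : ℕ) (hm : 1 ≤ m) : pp m M = ∑ r ∈ Finset.range (min m N), SS m r M := by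
  rw [pp_eq_sum M m hm]
  symm
  refine Finset.sum_subset (by simp) fun j hj hj' => ?_
  simp at hj hj'
  exact SS_eq_zero M m j hm (hj' hj) hj.le
end CUE

namespace CUE
open Matrix

/-- derivative along curves whose velocity is left multiplication by a matrix. -/
def HasD {N : ℕ} (f : Matrix (Fin N) (Fin N) ℂ → ℂ)
    (Df : Matrix (Fin N) (Fin N) ℂ → Matrix (Fin N) (Fin N) ℂ → ℂ) : Prop :=
  ∀ (γ : ℝ → Matrix (Fin N) (Fin N) ℂ) (X : Matrix (Fin N) (Fin N) ℂ) (t : ℝ),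
    (∀ i j, HasDerivAt (fun s => γ s i j) ((X * γ t) i j) t) →
    HasDerivAt (fun s => f (γ s)) (Df X (γ t)) t

structure HasGrad {N : ℕ} (f : Matrix (Fin N) (Fin N) ℂ → ℂ)
    (A : Matrix (Fin N) (Fin N) ℂ → Matrix (Fin N) (Fin N) ℂ) : Prop where
  cont : Continuous f
  contA : Continuous A
  hd : HasD f (fun X M => Matrix.trace (X * A M))

def HasLap {N : ℕ} (f : Matrix (Fin N) (Fin N) ℂ → ℂ)
    (A : Matrix (Fin N) (Fin N) ℂ → Matrix (Fin N) (Fin N) ℂ)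
    (L : Matrix (Fin N) (Fin N) ℂ → ℂ) : Prop :=
  HasGrad f A ∧ ∃ C : Fin N → Fin N → Matrix (Fin N) (Fin N) ℂ → Matrix (Fin N) (Fin N) ℂ,
    (∀ j k, HasGrad (fun M => A M j k) (C j k)) ∧ ∀ M, L M = ∑ j, ∑ k, C j k M k j

variable {N : ℕ}
variable {f g : Matrix (Fin N) (Fin N) ℂ → ℂ}
    {A B : Matrix (Fin N) (Fin N) ℂ → Matrix (Fin N) (Fin N) ℂ}
    {L K : Matrix (Fin N) (Fin N) ℂ → ℂ}

lemma HasGrad.const (c : ℂ) : HasGrad (N := N) (fun _ => c) (fun _ => 0) :=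
  ⟨continuous_const, continuous_const, fun γ X t _ => by simpa using hasDerivAt_const t c⟩

lemma HasGrad.add (hf : HasGrad f A) (hg : HasGrad g B) :
    HasGrad (fun M => f M + g M) (fun M => A M + B M) :=
  ⟨hf.cont.add hg.cont, hf.contA.add hg.contA, fun γ X t h => by
    have := (hf.hd γ X t h).add (hg.hd γ X t h)
    convert! this using 1
    simp [mul_add]⟩

lemma HasGrad.mul (hf : HasGrad f A) (hg : HasGrad g B) :
    HasGrad (fun M => f M * g M) (fun M => f M • B M + g M • A M) :=
  ⟨hf.cont.mul hg.cont, (hf.cont.smul hg.contA).add (hg.cont.smul hf.contA), fun γ X t h => by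
    have := (hf.hd γ X t h).mul (hg.hd γ X t h)
    convert! this using 1
    simp [mul_add]; ring⟩

lemma HasGrad.const_mul (c : ℂ) (hf : HasGrad f A) :
    HasGrad (fun M => c * f M) (fun M => c • A M) := by
  simpa using (HasGrad.const c).mul hf

lemma HasGrad.sum {ι : Type*} (s : Finset ι) {f : ι → Matrix (Fin N) (Fin N) ℂ → ℂ}
    {A : ι → Matrix (Fin N) (Fin N) ℂ → Matrix (Fin N) (Fin N) ℂ} (h : ∀ i ∈ s, HasGrad (f i) (A i)) :
    HasGrad (fun M => ∑ i ∈ s, f i M) (fun M => ∑ i ∈ s, A i M) := by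
  classical
  induction s using Finset.induction_on with
  | empty => simpa using HasGrad.const 0
  | insert a s ha ih =>
    simp only [Finset.sum_insert ha]
    exact (h a (by simp)).add (ih fun i hi => h i (by simp [hi]))

lemma HasLap.add (hf : HasLap f A L) (hg : HasLap g B K) :
    HasLap (fun M => f M + g M) (fun M => A M + B M) (fun M => L M + K M) := by
  obtain ⟨h1, C, hC, hL⟩ := hf
  obtain ⟨h2, C', hC', hL'⟩ := hg
  refine ⟨h1.add h2, fun j k M => C j k M + C' j k M, fun j k => (hC j k).add (hC' j k), fun M => ?_⟩
  simp [hL, hL', Finset.sum_add_distrib]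

lemma HasLap.mul (hf : HasLap f A L) (hg : HasLap g B K) :
    HasLap (fun M => f M * g M) (fun M => f M • B M + g M • A M)
      (fun M => f M * K M + g M * L M + 2 * Matrix.trace (A M * B M)) := by
  obtain ⟨h1, C, hC, hL⟩ := hf
  obtain ⟨h2, C', hC', hL'⟩ := hg
  refine ⟨h1.mul h2, fun j k M => (f M • C' j k M + B M j k • A M) + (g M • C j k M + A M j k • B M),
    fun j k => (h1.mul (hC' j k)).add (h2.mul (hC j k)), fun M => ?_⟩
  have e1 : Matrix.trace (A M * B M) = ∑ j, ∑ k, A M j k * B M k j := by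
    simp [Matrix.trace, Matrix.mul_apply]
  have e2 : Matrix.trace (A M * B M) = ∑ j, ∑ k, B M j k * A M k j := by
    rw [Matrix.trace_mul_comm]; simp [Matrix.trace, Matrix.mul_apply]
  beta_reduce
  rw [two_mul]
  nth_rw 1 [e1]
  rw [e2, hL, hL']
  simp only [Matrix.add_apply, Matrix.smul_apply, smul_eq_mul, Finset.sum_add_distrib, Finset.mul_sum]
  ring

lemma hasDerivAt_pow (k : ℕ) (γ : ℝ → Matrix (Fin N) (Fin N) ℂ) (X : Matrix (Fin N) (Fin N) ℂ) (t : ℝ)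
    (h : ∀ i j, HasDerivAt (fun s => γ s i j) ((X * γ t) i j) t) (i j : Fin N) :
    HasDerivAt (fun s => (γ s ^ k) i j) ((∑ l ∈ Finset.range k, γ t ^ l * X * γ t ^ (k - l)) i j) t := by
  induction k generalizing i j with
  | zero => simpa using hasDerivAt_const t _
  | succ k ih =>
    simp only [pow_succ, Matrix.mul_apply]
    have := HasDerivAt.fun_sum (u := Finset.univ) (fun (q : Fin N) _ => (ih i q).mul (h q j))
    convert! this using 1
    have key : (∑ l ∈ Finset.range (k+1), γ t ^ l * X * γ t ^ (k + 1 - l)) =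
        (∑ l ∈ Finset.range k, γ t ^ l * X * γ t ^ (k - l)) * γ t + γ t ^ k * (X * γ t) := by
      rw [Finset.sum_range_succ, Finset.sum_mul]
      have h2 : γ t ^ k * X * γ t ^ (k + 1 - k) = γ t ^ k * (X * γ t) := by simp [mul_assoc]
      rw [h2]
      congr 1
      refine Finset.sum_congr rfl fun l hl => ?_
      have : k + 1 - l = (k - l) + 1 := by have := Finset.mem_range.1 hl; omega
      rw [this, pow_succ]; simp only [mul_assoc]
    rw [Finset.sum_add_distrib, ← Matrix.mul_apply, ← Matrix.mul_apply, ← Matrix.add_apply, ← key]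

lemma HasGrad.pow_apply (k : ℕ) (i j : Fin N) :
    HasGrad (fun M => (M ^ k) i j)
      (fun M => ∑ l ∈ Finset.range k, M ^ (k - l) * Matrix.single j i 1 * M ^ l) := by
  refine ⟨by fun_prop, by fun_prop, fun γ X t h => ?_⟩
  convert! hasDerivAt_pow k γ X t h i j using 1
  beta_reduce
  rw [Finset.mul_sum, Matrix.trace_sum, Matrix.sum_apply]
  refine Finset.sum_congr rfl fun l hl => ?_
  rw [← mul_assoc, Matrix.trace_mul_comm, ← mul_assoc, ← mul_assoc]
  rw [Matrix.trace_mul_single]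
  simp

lemma HasGrad.pp (k : ℕ) : HasGrad (N := N) (pp k) (fun M => (k:ℂ) • M ^ k) := by
  have h := HasGrad.sum (N := N) Finset.univ (fun i _ => HasGrad.pow_apply k i i)
  refine ⟨h.cont, by fun_prop, fun γ X t hγ => ?_⟩
  convert! HasDerivAt.fun_sum (u := Finset.univ) (fun (q : Fin N) _ => hasDerivAt_pow k γ X t hγ q q) using 1
  change Matrix.trace (X * ((k:ℂ) • γ t ^ k)) = Matrix.trace (∑ l ∈ Finset.range k, γ t ^ l * X * γ t ^ (k - l))
  rw [Matrix.trace_sum, Finset.sum_congr rfl (g := fun _ => Matrix.trace (X * γ t ^ k))]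
  · simp
  · intro l hl
    rw [mul_assoc, Matrix.trace_mul_comm, mul_assoc, ← pow_add]
    congr 3
    have := Finset.mem_range.1 hl; omega

lemma sum_bb (ε : ℂ) (M : Matrix (Fin N) (Fin N) ℂ) (n : ℕ) :
    ∑ k ∈ Finset.range n, bb ε (k+1) M * M ^ (n - 1 - k)
      = ∑ k ∈ Finset.range n, yy ε k M • ((n - k : ℕ) : ℂ) • M ^ (n - k) := by
  induction n with
  | zero => simp
  | succ n ih =>
    have e1 : ∑ k ∈ Finset.range (n+1), bb ε (k+1) M * M ^ (n + 1 - 1 - k)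
       = M * (∑ k ∈ Finset.range n, bb ε (k+1) M * M ^ (n - 1 - k)) + bb ε (n+1) M := by
      rw [Finset.sum_range_succ, Finset.mul_sum]
      congr 1
      · refine Finset.sum_congr rfl fun k hk => ?_
        have : n + 1 - 1 - k = (n - 1 - k) + 1 := by have := Finset.mem_range.1 hk; omega
        rw [this, pow_succ', ← mul_assoc, ← mul_assoc, bb_comm]
      · simp
    rw [e1, ih, bb_eq_sum, Finset.mul_sum, Finset.sum_range_succ, Finset.sum_range_succ, ← add_assoc,
      ← Finset.sum_add_distrib]
    congr 1
    · refine Finset.sum_congr rfl fun k hk => ?_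
      have : n + 1 - k = (n - k) + 1 := by have := Finset.mem_range.1 hk; omega
      rw [this, pow_succ']
      push_cast
      simp only [Matrix.mul_smul]
      module
    · simp

lemma yy_succ_sum (ε : ℂ) (n : ℕ) (M : Matrix (Fin N) (Fin N) ℂ) : yy ε (n+1) M =
    ε / ((n : ℂ) + 1) * ∑ k ∈ Finset.range (n+1), yy ε k M * pp (n + 1 - k) M := by
  rw [yy_succ, trace_bb]

lemma HasGrad.yy (ε : ℂ) (hε : ε * ε = 1) (n : ℕ) : HasGrad (N := N) (yy ε n) (fun M => ε • bb ε n M) := by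
  induction n using Nat.strong_induction_on with
  | _ n ih =>
  cases n with
  | zero =>
    have e1 : CUE.yy (N := N) ε 0 = fun _ => 1 := rfl
    have e2 : (fun M : Matrix (Fin N) (Fin N) ℂ => ε • bb ε 0 M) = fun _ => 0 := by
      funext M; rw [bb_zero, smul_zero]
    rw [e1, e2]
    exact HasGrad.const (N := N) 1
  | succ n =>
    have h := (HasGrad.sum (N := N) (Finset.range (n+1)) (fun k hk =>
      (ih k (Finset.mem_range.1 hk)).mul (HasGrad.pp (n + 1 - k)))).const_mul (ε / ((n : ℂ) + 1))
    have e1 : CUE.yy (N := N) ε (n+1) = fun M => ε / ((n : ℂ) + 1) * ∑ k ∈ Finset.range (n+1), CUE.yy ε k M * CUE.pp (n + 1 - k) M := by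
      ext M; exact yy_succ_sum ε n M
    rw [e1]
    convert! h using 1
    ext1 M
    have key := bb_key ε M hε (n+1)
    rw [sum_bb] at key
    rw [Finset.sum_add_distrib]
    have : ∑ k ∈ Finset.range (n+1), CUE.pp (n + 1 - k) M • ε • bb ε k M = ε • ∑ k ∈ Finset.range (n+1), CUE.pp (n + 1 - k) M • bb ε k M := by
      rw [Finset.smul_sum]; exact Finset.sum_congr rfl fun k hk => smul_comm _ _ _
    rw [this, key, smul_smul]
    congr 1
    have : (n : ℂ) + 1 ≠ 0 := Nat.cast_add_one_ne_zero n
    push_cast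
    field_simp

lemma div_pow (k : ℕ) (M : Matrix (Fin N) (Fin N) ℂ) : ∑ i, ∑ j, (∑ l ∈ Finset.range k, M ^ (k - l) * Matrix.single j i (1:ℂ) * M ^ l : Matrix (Fin N) (Fin N) ℂ) j i
   = ∑ l ∈ Finset.range k, pp l M * pp (k - l) M := by
    simp only [Matrix.sum_apply]
    have : ∀ (i j : Fin N) (l : ℕ), (M ^ (k - l) * Matrix.single j i (1:ℂ) * M ^ l : Matrix (Fin N) (Fin N) ℂ) j i = (M ^ (k-l)) j j * (M ^ l) i i := by
      intro i j l
      rw [mul_assoc, Matrix.mul_apply, Finset.sum_eq_single j]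
      · simp
      · intro b _ hb; simp [hb]
      · simp
    simp only [this]
    rw [Finset.sum_congr rfl (fun i _ => Finset.sum_comm), Finset.sum_comm]
    refine Finset.sum_congr rfl fun l _ => ?_
    simp only [CUE.pp, Matrix.trace, Matrix.diag, Finset.sum_mul_sum]
    exact Finset.sum_congr rfl fun i _ => Finset.sum_congr rfl fun j _ => mul_comm _ _

lemma HasLap.pp (k : ℕ) : HasLap (N := N) (pp k) (fun M => (k:ℂ) • M ^ k)
    (fun M => (k:ℂ) * ∑ l ∈ Finset.range k, pp l M * pp (k - l) M) := by
  refine ⟨HasGrad.pp k, fun i j M => (k:ℂ) • ∑ l ∈ Finset.range k, M ^ (k - l) * Matrix.single j i 1 * M ^ l,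
    fun i j => ?_, fun M => ?_⟩
  · simpa using (HasGrad.pow_apply k i j).const_mul k
  · beta_reduce
    rw [← div_pow]
    simp only [Matrix.smul_apply, smul_eq_mul, ← Finset.mul_sum]

lemma HasLap.yy (ε : ℂ) (hε : ε * ε = 1) (n : ℕ) : HasLap (N := N) (yy ε n) (fun M => ε • bb ε n M)
    (fun M => (N + ε * ((n:ℂ) - 1)) * n * yy ε n M) := by
  refine ⟨HasGrad.yy ε hε n, fun i j M => ε • ∑ k ∈ Finset.range n, (CUE.yy ε k M •
    (∑ l ∈ Finset.range (n - k), M ^ (n - k - l) * Matrix.single j i 1 * M ^ l) + (M ^ (n - k)) i j • (ε • bb ε k M)),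
    fun i j => ?_, fun M => ?_⟩
  · have := (HasGrad.sum (N := N) (Finset.range n) (fun k hk =>
      (HasGrad.yy ε hε k).mul (HasGrad.pow_apply (n - k) i j))).const_mul ε
    convert! this using 2 with M
    beta_reduce
    rw [bb_eq_sum]
    simp [Matrix.sum_apply]
  · have h := div_bb ε M hε n
    beta_reduce
    rw [mul_assoc, nyy, mul_left_comm, ← h]
    simp only [Matrix.smul_apply, Matrix.sum_apply, Matrix.add_apply, smul_eq_mul, ← Finset.mul_sum]
    congr 1
    rw [Finset.sum_congr rfl (fun i _ => Finset.sum_comm), Finset.sum_comm]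
    refine Finset.sum_congr rfl fun k _ => ?_
    rw [add_comm]
    simp only [Finset.sum_add_distrib, ← Finset.mul_sum]
    congr 1
    · rw [← div_pow]; simp only [Matrix.sum_apply]
    · rw [Matrix.trace_mul_comm]
      simp only [Matrix.trace, Matrix.diag, Matrix.mul_apply, Finset.mul_sum]
      exact Finset.sum_congr rfl fun i _ => Finset.sum_congr rfl fun j _ => by ring

noncomputable def kap (N m r : ℕ) : ℝ := m * ((N:ℝ) + m - 1 - 2 * r)

lemma HasLap.SS (m r : ℕ) (hr : r ≤ m) : ∃ A, HasLap (N := N) (SS m r) A (fun M => (kap N m r : ℂ) * SS m r M) := by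
  have hc : ∀ r, r ≤ m → ∃ A, HasLap (N := N) (cc m r) A (fun M => (r * ((N:ℂ) - r + 1)
      + ((m:ℂ) - r) * (N + ((m:ℂ) - r) - 1) + 2 * ((m:ℂ) - r)) * cc m r M - 2 * m * CUE.SS m r M) := by
    intro r hr
    have := (HasLap.yy (N := N) (-1) (by ring) r).mul (HasLap.yy (N := N) 1 (by ring) (m - r))
    refine ⟨fun M => CUE.yy (-1) r M • (1:ℂ) • bb 1 (m - r) M + CUE.yy 1 (m - r) M • (-1:ℂ) • bb (-1) r M, ?_⟩
    · convert! this using 2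
      rename_i M
      have hG := Gam M m r hr
      simp only [Matrix.smul_mul, one_smul, Matrix.trace_smul, hG, Nat.cast_sub hr, neg_smul, Matrix.neg_mul, Matrix.trace_neg]
      rw [cc]
      ring
  induction r with
  | zero =>
    obtain ⟨A, hA⟩ := hc 0 (by omega)
    refine ⟨A, ?_⟩
    have : CUE.SS (N := N) m 0 = cc m 0 := by ext M; exact SS_zero M m
    rw [this]
    rw [this] at hA
    convert! hA using 2 with M
    simp [kap]; ring
  | succ r ih =>
    obtain ⟨A, hA⟩ := hc (r+1) hr
    obtain ⟨A', hA'⟩ := ih (by omega)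
    refine ⟨fun M => A' M + A M, ?_⟩
    · have := hA'.add hA
      convert! this using 2 with M M
      · exact SS_succ M m r
      · rw [SS_succ]; simp [kap]; ring

end CUE

namespace CUE
open Matrix

section UG
variable {N : ℕ}

instance instSC : SecondCountableTopology (Matrix (Fin N) (Fin N) ℂ) :=
  inferInstanceAs (SecondCountableTopology (Fin N → Fin N → ℂ))

instance instT2 : T2Space (Matrix (Fin N) (Fin N) ℂ) :=
  inferInstanceAs (T2Space (Fin N → Fin N → ℂ))

instance instSCU : SecondCountableTopology (Matrix.unitaryGroup (Fin N) ℂ) :=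
  TopologicalSpace.Subtype.secondCountableTopology (α := Matrix (Fin N) (Fin N) ℂ) _

instance instCompactU : CompactSpace (Matrix.unitaryGroup (Fin N) ℂ) := by
  have hc : IsCompact ((Matrix.unitaryGroup (Fin N) ℂ : Set (Matrix (Fin N) (Fin N) ℂ))) := by
    have h1 : IsCompact (Set.pi Set.univ (fun _ : Fin N => Set.pi Set.univ
        (fun _ : Fin N => Metric.closedBall (0:ℂ) 1))) :=
      isCompact_univ_pi fun _ => isCompact_univ_pi fun _ => isCompact_closedBall _ _
    refine IsCompact.of_isClosed_subset h1 ?_ ?_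
    · have : (Matrix.unitaryGroup (Fin N) ℂ : Set (Matrix (Fin N) (Fin N) ℂ)) = {M | M * star M = 1} := by
        ext M; exact Matrix.mem_unitaryGroup_iff
      rw [this]
      exact isClosed_eq (by fun_prop) continuous_const
    · intro U hU i _ j _
      simpa using entry_norm_bound_of_unitary hU i j
  exact isCompact_iff_compactSpace.1 hc

lemma integrable_cont {ℙ : Measure (Matrix.unitaryGroup (Fin N) ℂ)} [IsProbabilityMeasure ℙ]
    {E : Type*} [NormedAddCommGroup E]
    {f : Matrix.unitaryGroup (Fin N) ℂ → E} (hf : Continuous f) : Integrable f ℙ :=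
  hf.integrable_of_hasCompactSupport (HasCompactSupport.of_compactSpace f)

attribute [local instance] Matrix.linftyOpNormedRing Matrix.linftyOpNormedAlgebra

lemma exp_deriv (X : Matrix (Fin N) (Fin N) ℂ) (t : ℝ) (V : Matrix (Fin N) (Fin N) ℂ) (i j : Fin N) :
    HasDerivAt (fun s : ℝ => (NormedSpace.exp (s • X) * V) i j) ((X * (NormedSpace.exp (t • X) * V)) i j) t := by
  have h := (hasDerivAt_exp_smul_const' (𝕂 := ℝ) X t).mul_const V
  rw [mul_assoc] at h
  have h2 := hasDerivAt_pi.1 (hasDerivAt_pi.1 h i) j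
  exact h2

lemma exp_unitary (X : Matrix (Fin N) (Fin N) ℂ) (hX : star X = -X) (t : ℝ) :
    NormedSpace.exp (t • X) ∈ Matrix.unitaryGroup (Fin N) ℂ := by
  have h : (t • X)ᴴ = -(t • X) := by
    rw [← Matrix.star_eq_conjTranspose, star_smul, hX]
    simp
  rw [Matrix.mem_unitaryGroup_iff', Matrix.star_eq_conjTranspose, ← Matrix.exp_conjTranspose, h, Matrix.exp_neg]
  exact Matrix.nonsing_inv_mul _ ((Matrix.isUnit_iff_isUnit_det _).1 (Matrix.isUnit_exp _))

end UG

section IBP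
variable {N : ℕ} {ℙ : Measure (Matrix.unitaryGroup (Fin N) ℂ)} [IsProbabilityMeasure ℙ] [ℙ.IsHaarMeasure]

lemma int_D (X : Matrix (Fin N) (Fin N) ℂ) (hX : star X = -X)
    {f : Matrix (Fin N) (Fin N) ℂ → ℂ} {Df : Matrix (Fin N) (Fin N) ℂ → Matrix (Fin N) (Fin N) ℂ → ℂ}
    (hf : Continuous f) (hDf : Continuous (Df X)) (h : HasD f Df) :
    ∫ U : Matrix.unitaryGroup (Fin N) ℂ, Df X (U : Matrix (Fin N) (Fin N) ℂ) ∂ℙ = 0 := by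
  let g : ℝ → Matrix.unitaryGroup (Fin N) ℂ := fun t => ⟨NormedSpace.exp (t • X), exp_unitary X hX t⟩
  have hc : Continuous (fun U : Matrix.unitaryGroup (Fin N) ℂ => f (U : Matrix (Fin N) (Fin N) ℂ)) :=
    hf.comp continuous_subtype_val
  have hc' : Continuous (fun U : Matrix.unitaryGroup (Fin N) ℂ => Df X (U : Matrix (Fin N) (Fin N) ℂ)) :=
    hDf.comp continuous_subtype_val
  have hm : ∀ t, Continuous (fun U : Matrix.unitaryGroup (Fin N) ℂ => g t * U) := fun t => continuous_const_mul _
  obtain ⟨C, hC⟩ := isCompact_univ.exists_bound_of_continuousOn hc'.continuousOn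
  have key := hasDerivAt_integral_of_dominated_loc_of_deriv_le (μ := ℙ) (𝕜 := ℝ) (x₀ := 0)
    (F := fun t U => f (g t * U : Matrix.unitaryGroup (Fin N) ℂ))
    (F' := fun t U => Df X (g t * U : Matrix.unitaryGroup (Fin N) ℂ)) (bound := fun _ => C) (s := Set.univ)
    Filter.univ_mem (Eventually.of_forall fun t => (hc.comp (hm t)).aestronglyMeasurable)
    (integrable_cont (hc.comp (hm 0))) (hc'.comp (hm 0)).aestronglyMeasurable
    (Eventually.of_forall fun U t _ => hC _ (Set.mem_univ _)) (integrable_const _)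
    (Eventually.of_forall fun U t _ => h (fun s => NormedSpace.exp (s • X) * (U : Matrix (Fin N) (Fin N) ℂ)) X t
      (fun i j => exp_deriv X t _ i j))
  have h1 := key.2
  have e1 : ∀ t, ∫ U, f (g t * U : Matrix.unitaryGroup (Fin N) ℂ) ∂ℙ = ∫ U : Matrix.unitaryGroup (Fin N) ℂ, f U ∂ℙ := fun t =>
    integral_mul_left_eq_self (fun U : Matrix.unitaryGroup (Fin N) ℂ => f U) (g t)
  simp only [e1] at h1
  have h2 := h1.unique (hasDerivAt_const _ _)
  have e2 := integral_mul_left_eq_self (μ := ℙ) (fun U : Matrix.unitaryGroup (Fin N) ℂ => Df X U) (g 0)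
  rw [← e2]; exact h2

lemma HasD.conj_mul {a g : Matrix (Fin N) (Fin N) ℂ → ℂ} {A B : Matrix (Fin N) (Fin N) ℂ → Matrix (Fin N) (Fin N) ℂ}
    (ha : HasGrad a A) (hg : HasGrad g B) : HasD (fun M => a M * star (g M))
      (fun X M => Matrix.trace (X * A M) * star (g M) + a M * star (Matrix.trace (X * B M))) := by
  intro γ X t h
  exact (ha.hd γ X t h).mul (hg.hd γ X t h).star

lemma ibp_skew (X : Matrix (Fin N) (Fin N) ℂ) (hX : star X = -X)
    {a g : Matrix (Fin N) (Fin N) ℂ → ℂ} {A B : Matrix (Fin N) (Fin N) ℂ → Matrix (Fin N) (Fin N) ℂ}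
    (ha : HasGrad a A) (hg : HasGrad g B) :
    ∫ U : Matrix.unitaryGroup (Fin N) ℂ, Matrix.trace (X * A U) * star (g U) ∂ℙ
      = - ∫ U : Matrix.unitaryGroup (Fin N) ℂ, a U * star (Matrix.trace (X * B U)) ∂ℙ := by
  have c1 := ha.cont; have c2 := ha.contA; have c3 := hg.cont; have c4 := hg.contA
  have h := int_D (ℙ := ℙ) X hX (f := fun M => a M * star (g M)) (by fun_prop) (by fun_prop) (HasD.conj_mul ha hg)
  rw [integral_add] at h
  · exact eq_neg_of_add_eq_zero_left h
  · exact integrable_cont (by fun_prop)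
  · exact integrable_cont (by fun_prop)

lemma ibp (X : Matrix (Fin N) (Fin N) ℂ)
    {a g : Matrix (Fin N) (Fin N) ℂ → ℂ} {A B : Matrix (Fin N) (Fin N) ℂ → Matrix (Fin N) (Fin N) ℂ}
    (ha : HasGrad a A) (hg : HasGrad g B) :
    ∫ U : Matrix.unitaryGroup (Fin N) ℂ, Matrix.trace (X * A U) * star (g U) ∂ℙ
      = ∫ U : Matrix.unitaryGroup (Fin N) ℂ, a U * star (Matrix.trace (star X * B U)) ∂ℙ := by
  have c1 := ha.cont; have c2 := ha.contA; have c3 := hg.cont; have c4 := hg.contA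
  set S := (1/2 : ℂ) • (X - star X) with hS
  set T := (-Complex.I/2 : ℂ) • (X + star X) with hT
  have h1 := ibp_skew (ℙ := ℙ) S (by rw [hS, star_smul]; simp [sub_eq_add_neg, smul_add, add_comm]) ha hg
  have h2 := ibp_skew (ℙ := ℙ) T (by rw [hT, star_smul, star_add, star_star, add_comm, ← neg_smul]; congr 1; simp; ring) ha hg
  have e1 : X = S + Complex.I • T := by
    rw [hS, hT, smul_smul, show Complex.I * (-Complex.I/2) = 1/2 by linear_combination (-1/2) * Complex.I_mul_I, ← smul_add]
    simp [← two_smul ℂ X, smul_smul]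
  have e2 : star X = - S + Complex.I • T := by
    rw [hS, hT, smul_smul, show Complex.I * (-Complex.I/2) = 1/2 by linear_combination (-1/2) * Complex.I_mul_I, ← smul_neg, ← smul_add]
    simp only [neg_sub]
    module
  have f1 : ∀ M : Matrix (Fin N) (Fin N) ℂ, Matrix.trace (X * A M) * star (g M) = Matrix.trace (S * A M) * star (g M)
      + Complex.I * (Matrix.trace (T * A M) * star (g M)) := by
    intro M
    conv_lhs => rw [e1]
    simp [add_mul]; ring
  have f2 : ∀ M : Matrix (Fin N) (Fin N) ℂ, a M * star (Matrix.trace (star X * B M)) = - (a M * star (Matrix.trace (S * B M)))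
      - Complex.I * (a M * star (Matrix.trace (T * B M))) := by
    intro M
    conv_lhs => rw [e2]
    simp [add_mul]; ring
  simp only [f1, f2]
  rw [integral_add, integral_sub, integral_neg, integral_const_mul, integral_const_mul, h1, h2]
  · ring
  · exact integrable_cont (by fun_prop)
  · exact integrable_cont (by fun_prop)
  · exact integrable_cont (by fun_prop)
  · exact integrable_cont (by fun_prop)

lemma lap_ibp {f g : Matrix (Fin N) (Fin N) ℂ → ℂ} {A B : Matrix (Fin N) (Fin N) ℂ → Matrix (Fin N) (Fin N) ℂ}
    {L : Matrix (Fin N) (Fin N) ℂ → ℂ} (hf : HasLap f A L) (hg : HasGrad g B) :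
    ∫ U : Matrix.unitaryGroup (Fin N) ℂ, L U * star (g U) ∂ℙ
      = ∑ j, ∑ k, ∫ U : Matrix.unitaryGroup (Fin N) ℂ, A U j k * star (B U j k) ∂ℙ := by
  obtain ⟨hA, C, hC, hL⟩ := hf
  have c3 := hg.cont; have c4 := fun j k => (hC j k).contA
  simp only [hL, Finset.sum_mul]
  rw [integral_finsetSum _ (fun j _ => integrable_cont (by fun_prop))]
  refine Finset.sum_congr rfl fun j _ => ?_
  rw [integral_finsetSum _ (fun j _ => integrable_cont (by fun_prop))]
  refine Finset.sum_congr rfl fun k _ => ?_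
  have h := ibp (ℙ := ℙ) (Matrix.single j k 1) (hC j k) hg
  convert h using 4
  · rw [Matrix.trace_single_mul]; simp
  · rw [Matrix.star_eq_conjTranspose, Matrix.conjTranspose_single, Matrix.trace_single_mul]; simp

lemma lap_symm {f g : Matrix (Fin N) (Fin N) ℂ → ℂ} {A B : Matrix (Fin N) (Fin N) ℂ → Matrix (Fin N) (Fin N) ℂ}
    {L K : Matrix (Fin N) (Fin N) ℂ → ℂ} (hf : HasLap f A L) (hg : HasLap g B K) :
    ∫ U : Matrix.unitaryGroup (Fin N) ℂ, L U * star (g U) ∂ℙ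
      = ∫ U : Matrix.unitaryGroup (Fin N) ℂ, f U * star (K U) ∂ℙ := by
  have h1 := lap_ibp (ℙ := ℙ) hf hg.1
  have h2 := congrArg (starRingEnd ℂ) (lap_ibp (ℙ := ℙ) hg hf.1)
  rw [h1]
  simp only [map_sum, ← integral_conj] at h2
  simp only [map_mul, RCLike.star_def, Complex.conj_conj] at h2 ⊢
  simp only [mul_comm (f _), mul_comm (A _ _ _)]
  exact h2.symm

end IBP
end CUE

namespace CUE
open Matrix

section Mom
variable {N : ℕ} {ℙ : Measure (Matrix.unitaryGroup (Fin N) ℂ)} [IsProbabilityMeasure ℙ] [ℙ.IsHaarMeasure]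

lemma orth_pp (j k : ℕ) (h : j ≠ k) :
    ∫ U : Matrix.unitaryGroup (Fin N) ℂ, pp j (U : Matrix (Fin N) (Fin N) ℂ) * star (pp k (U : Matrix (Fin N) (Fin N) ℂ)) ∂ℙ = 0 := by
  have := ibp (ℙ := ℙ) 1 (HasGrad.pp j) (HasGrad.pp k)
  simp only [star_one, one_mul, Matrix.trace_smul, smul_eq_mul, star_mul', ← mul_assoc] at this
  simp only [mul_assoc, mul_left_comm _ (star ((k:ℕ):ℂ))] at this
  rw [integral_const_mul, integral_const_mul, star_natCast] at this
  have h2 : ((j:ℂ) - k) * ∫ U : Matrix.unitaryGroup (Fin N) ℂ, pp j (U : Matrix (Fin N) (Fin N) ℂ) * star (pp k (U : Matrix (Fin N) (Fin N) ℂ)) ∂ℙ = 0 := by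
    rw [sub_mul, sub_eq_zero]; exact this
  refine (mul_eq_zero.1 h2).resolve_left ?_
  refine sub_ne_zero.2 ?_
  exact_mod_cast h

lemma orth_pp' (j k : ℕ) (h : j + k ≠ 0) :
    ∫ U : Matrix.unitaryGroup (Fin N) ℂ, pp j (U : Matrix (Fin N) (Fin N) ℂ) * pp k (U : Matrix (Fin N) (Fin N) ℂ) ∂ℙ = 0 := by
  have := ibp (ℙ := ℙ) 1 ((HasGrad.pp j).mul (HasGrad.pp k)) (HasGrad.const 1)
  simp only [star_one, one_mul, mul_one, Matrix.trace_add, Matrix.trace_smul, smul_eq_mul, Matrix.trace_zero, star_zero,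
    mul_zero, integral_zero] at this
  have h2 : ((j:ℂ) + k) * ∫ U : Matrix.unitaryGroup (Fin N) ℂ, pp j (U : Matrix (Fin N) (Fin N) ℂ) * pp k (U : Matrix (Fin N) (Fin N) ℂ) ∂ℙ = 0 := by
    rw [← integral_const_mul, ← this]
    refine integral_congr_ae (Eventually.of_forall fun U => ?_)
    simp only [pp]; ring
  refine (mul_eq_zero.1 h2).resolve_left ?_
  exact_mod_cast h

lemma SS_cont (m r : ℕ) (hr : r ≤ m) : Continuous (SS (N := N) m r) := by
  obtain ⟨A, hA⟩ := HasLap.SS (N := N) m r hr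
  exact hA.1.cont

lemma pp_cont (m : ℕ) : Continuous (pp (N := N) m) := (HasGrad.pp m).cont

lemma orth_SS (m r q : ℕ) (hm : 1 ≤ m) (hr : r ≤ m) (hq : q ≤ m) (h : r ≠ q) :
    ∫ U : Matrix.unitaryGroup (Fin N) ℂ, SS m r (U : Matrix (Fin N) (Fin N) ℂ) * star (SS m q (U : Matrix (Fin N) (Fin N) ℂ)) ∂ℙ = 0 := by
  obtain ⟨A, hA⟩ := HasLap.SS (N := N) m r hr
  obtain ⟨B, hB⟩ := HasLap.SS (N := N) m q hq
  have := lap_symm (ℙ := ℙ) hA hB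
  simp only [star_mul', mul_assoc, mul_left_comm _ (star ((kap N m q:ℝ):ℂ))] at this
  rw [integral_const_mul, integral_const_mul, RCLike.star_def, Complex.conj_ofReal] at this
  have h2 : ((kap N m r : ℂ) - kap N m q) * ∫ U : Matrix.unitaryGroup (Fin N) ℂ, SS m r (U : Matrix (Fin N) (Fin N) ℂ) * star (SS m q (U : Matrix (Fin N) (Fin N) ℂ)) ∂ℙ = 0 := by
    rw [sub_mul, sub_eq_zero]; exact this
  refine (mul_eq_zero.1 h2).resolve_left ?_
  refine sub_ne_zero.2 ?_
  intro h3
  have h4 : kap N m r = kap N m q := by exact_mod_cast h3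
  unfold kap at h4
  have h5 := mul_left_cancel₀ (by positivity : (m:ℝ) ≠ 0) h4
  apply h
  have : (r:ℝ) = q := by linarith
  exact_mod_cast this

lemma int_norm_sq (f : Matrix.unitaryGroup (Fin N) ℂ → ℂ) :
    ∫ U : Matrix.unitaryGroup (Fin N) ℂ, f U * star (f U) ∂ℙ = ((∫ U, ‖f U‖ ^ 2 ∂ℙ : ℝ) : ℂ) := by
  rw [← integral_complex_ofReal]
  refine integral_congr_ae (Eventually.of_forall fun U => ?_)
  simp [Complex.mul_conj']

lemma SS_pp (m r : ℕ) (hm : 1 ≤ m) (hr : r < min m N) :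
    ∫ U : Matrix.unitaryGroup (Fin N) ℂ, SS m r (U : Matrix (Fin N) (Fin N) ℂ) * star (pp m (U : Matrix (Fin N) (Fin N) ℂ)) ∂ℙ
     = ((∫ U : Matrix.unitaryGroup (Fin N) ℂ, ‖SS m r (U : Matrix (Fin N) (Fin N) ℂ)‖ ^ 2 ∂ℙ : ℝ) : ℂ) := by
  have hle : ∀ q ∈ Finset.range (min m N), q ≤ m := fun q hq =>
    (Finset.mem_range.1 hq).le.trans (min_le_left _ _)
  rw [← int_norm_sq]
  simp only [pp_eq_sum' _ m hm, star_sum, Finset.mul_sum]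
  rw [integral_finsetSum]
  · rw [Finset.sum_eq_single_of_mem r (Finset.mem_range.2 hr)]
    intro q hq hqr
    exact orth_SS m r q hm (hle r (Finset.mem_range.2 hr)) (hle q hq) hqr.symm
  · intro q hq
    have c1 := SS_cont (N := N) m r (hle r (Finset.mem_range.2 hr))
    have c2 := SS_cont (N := N) m q (hle q hq)
    exact integrable_cont (by fun_prop)

lemma unitary_row_sum (V : Matrix (Fin N) (Fin N) ℂ) (hV : V ∈ Matrix.unitaryGroup (Fin N) ℂ) :
    ∑ j, ∑ k, V j k * star (V j k) = N := by
  have h := Matrix.mem_unitaryGroup_iff.1 hV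
  have : Matrix.trace (V * star V) = N := by rw [h]; simp
  rw [← this]
  simp [Matrix.trace, Matrix.mul_apply, Matrix.star_apply]

lemma energy (m : ℕ) (hm : 1 ≤ m) :
    ∑ r ∈ Finset.range (min m N), kap N m r * ∫ U : Matrix.unitaryGroup (Fin N) ℂ, ‖SS m r (U : Matrix (Fin N) (Fin N) ℂ)‖ ^ 2 ∂ℙ
     = (m:ℝ)^2 * N := by
  have hle : ∀ q ∈ Finset.range (min m N), q ≤ m := fun q hq =>
    (Finset.mem_range.1 hq).le.trans (min_le_left _ _)
  set K : Matrix (Fin N) (Fin N) ℂ → ℂ := (fun M => (m:ℂ) * ∑ l ∈ Finset.range m, pp l M * pp (m - l) M) with hK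
  have hp : HasLap (N := N) (pp m) _ K := HasLap.pp m
  have cp := pp_cont (N := N)
  have cK : Continuous K := by fun_prop
  have h1 : ∀ r ∈ Finset.range (min m N), (kap N m r : ℂ) * ((∫ U : Matrix.unitaryGroup (Fin N) ℂ, ‖SS m r (U : Matrix (Fin N) (Fin N) ℂ)‖ ^ 2 ∂ℙ : ℝ) : ℂ)
     = ∫ U : Matrix.unitaryGroup (Fin N) ℂ, SS m r (U : Matrix (Fin N) (Fin N) ℂ) * star (K U) ∂ℙ := by
    intro r hr
    obtain ⟨A, hA⟩ := HasLap.SS (N := N) m r (hle r hr)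
    rw [← lap_symm hA hp, ← SS_pp m r hm (Finset.mem_range.1 hr), ← integral_const_mul]
    simp only [mul_assoc]
  have h2 : ∑ r ∈ Finset.range (min m N), (kap N m r : ℂ) * ((∫ U : Matrix.unitaryGroup (Fin N) ℂ, ‖SS m r (U : Matrix (Fin N) (Fin N) ℂ)‖ ^ 2 ∂ℙ : ℝ) : ℂ)
      = ∫ U : Matrix.unitaryGroup (Fin N) ℂ, pp m (U : Matrix (Fin N) (Fin N) ℂ) * star (K U) ∂ℙ := by
    rw [Finset.sum_congr rfl h1, ← integral_finsetSum]
    · simp only [pp_eq_sum' _ m hm, Finset.sum_mul]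
    · intro q hq
      have c2 := SS_cont (N := N) m q (hle q hq)
      exact integrable_cont (by fun_prop)
  rw [← lap_symm hp hp, lap_ibp hp hp.1] at h2
  have h3 : ∑ j, ∑ k, ∫ U : Matrix.unitaryGroup (Fin N) ℂ, ((m:ℂ) • (U : Matrix (Fin N) (Fin N) ℂ) ^ m) j k * star (((m:ℂ) • (U : Matrix (Fin N) (Fin N) ℂ) ^ m) j k) ∂ℙ
      = (m:ℂ)^2 * N := by
    rw [Finset.sum_congr rfl (fun j _ => (integral_finsetSum _ (fun k _ => integrable_cont (by fun_prop))).symm)]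
    rw [← integral_finsetSum _ (fun k _ => integrable_cont (by fun_prop))]
    have : ∀ U : Matrix.unitaryGroup (Fin N) ℂ, ∑ j, ∑ k, ((m:ℂ) • (U : Matrix (Fin N) (Fin N) ℂ) ^ m) j k * star (((m:ℂ) • (U : Matrix (Fin N) (Fin N) ℂ) ^ m) j k) = (m:ℂ)^2 * N := by
      intro U
      rw [← unitary_row_sum ((U : Matrix (Fin N) (Fin N) ℂ) ^ m) (pow_mem U.2 m), Finset.mul_sum]
      refine Finset.sum_congr rfl fun j _ => ?_
      rw [Finset.mul_sum]
      refine Finset.sum_congr rfl fun k _ => ?_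
      simp only [Matrix.smul_apply, smul_eq_mul, star_mul', star_natCast]
      ring
    simp only [this]
    simp
  rw [h3] at h2
  exact_mod_cast h2

lemma kap_ge (m r : ℕ) (hr : r < min m N) : (m:ℝ) * (|(N:ℝ) - m| + 1) ≤ kap N m r := by
  unfold kap
  apply mul_le_mul_of_nonneg_left _ (Nat.cast_nonneg m)
  have h1 : (r:ℝ) + 1 ≤ m := by exact_mod_cast (lt_min_iff.1 hr).1
  have h2 : (r:ℝ) + 1 ≤ N := by exact_mod_cast (lt_min_iff.1 hr).2
  rcases abs_cases ((N:ℝ) - m) with h | h <;> linarith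

lemma pp_sq (m : ℕ) (hm : 1 ≤ m) :
    (|(N:ℝ) - m| + 1) * ∫ U : Matrix.unitaryGroup (Fin N) ℂ, ‖pp m (U : Matrix (Fin N) (Fin N) ℂ)‖ ^ 2 ∂ℙ ≤ m * N := by
  have hle : ∀ q ∈ Finset.range (min m N), q ≤ m := fun q hq =>
    (Finset.mem_range.1 hq).le.trans (min_le_left _ _)
  have h1 : ∫ U : Matrix.unitaryGroup (Fin N) ℂ, ‖pp m (U : Matrix (Fin N) (Fin N) ℂ)‖ ^ 2 ∂ℙ
     = ∑ r ∈ Finset.range (min m N), ∫ U : Matrix.unitaryGroup (Fin N) ℂ, ‖SS m r (U : Matrix (Fin N) (Fin N) ℂ)‖ ^ 2 ∂ℙ := by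
    have : (((∫ U : Matrix.unitaryGroup (Fin N) ℂ, ‖pp m (U : Matrix (Fin N) (Fin N) ℂ)‖ ^ 2 ∂ℙ : ℝ)) : ℂ)
     = ∑ r ∈ Finset.range (min m N), ((∫ U : Matrix.unitaryGroup (Fin N) ℂ, ‖SS m r (U : Matrix (Fin N) (Fin N) ℂ)‖ ^ 2 ∂ℙ : ℝ) : ℂ) := by
      rw [← int_norm_sq]
      rw [Finset.sum_congr rfl (fun r hr => (SS_pp m r hm (Finset.mem_range.1 hr)).symm), ← integral_finsetSum]
      · refine integral_congr_ae (Eventually.of_forall fun U => ?_)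
        beta_reduce
        rw [← Finset.sum_mul, ← pp_eq_sum' _ m hm]
      · intro q hq
        have c2 := SS_cont (N := N) m q (hle q hq)
        have cp := pp_cont (N := N)
        exact integrable_cont (by fun_prop)
    exact_mod_cast this
  have hm0 : (0:ℝ) < m := by exact_mod_cast hm
  refine le_of_mul_le_mul_left ?_ hm0
  calc _ = ∑ r ∈ Finset.range (min m N), ((m:ℝ) * (|(N:ℝ) - m| + 1)) * ∫ U : Matrix.unitaryGroup (Fin N) ℂ, ‖SS m r (U : Matrix (Fin N) (Fin N) ℂ)‖ ^ 2 ∂ℙ := by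
        rw [h1, ← Finset.mul_sum]; ring
    _ ≤ ∑ r ∈ Finset.range (min m N), kap N m r * ∫ U : Matrix.unitaryGroup (Fin N) ℂ, ‖SS m r (U : Matrix (Fin N) (Fin N) ℂ)‖ ^ 2 ∂ℙ := by
        refine Finset.sum_le_sum fun r hr => ?_
        exact mul_le_mul_of_nonneg_right (kap_ge m r (Finset.mem_range.1 hr)) (integral_nonneg fun U => by positivity)
    _ = m * (m * N) := by rw [energy m hm]; ring

end Mom
end CUE

namespace CUE
open Matrix

section Bd

lemma harm_bound (N : ℕ) (hN : 1 ≤ N) (K : ℕ) :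
    ∑ i ∈ Finset.range K, (N:ℝ) / (((i:ℝ) + 1) * (|(N:ℝ) - (i + 1 : ℕ)| + 1)) ≤ 4 * (harmonic N : ℝ) := by
  have hN0 : (1:ℝ) ≤ N := by exact_mod_cast hN
  have hH : (harmonic N : ℝ) = ∑ i ∈ Finset.range N, 1 / ((i:ℝ) + 1) := by
    simp [harmonic]
  have hH1 : (1:ℝ) ≤ harmonic N := by
    rw [hH]
    have := Finset.single_le_sum (f := fun i : ℕ => 1 / ((i:ℝ) + 1)) (fun i _ => by positivity) (Finset.mem_range.2 (by omega : 0 < N))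
    simpa using this
  have mono : ∑ i ∈ Finset.range K, (N:ℝ) / (((i:ℝ) + 1) * (|(N:ℝ) - (i + 1 : ℕ)| + 1)) ≤
     ∑ i ∈ Finset.range (N + N + K), (N:ℝ) / (((i:ℝ) + 1) * (|(N:ℝ) - (i + 1 : ℕ)| + 1)) := by
    refine Finset.sum_le_sum_of_subset_of_nonneg ?_ (fun i _ _ => by positivity)
    intro i; simp only [Finset.mem_range]; omega
  refine mono.trans ?_
  rw [Finset.sum_range_add, Finset.sum_range_add]
  have a1 : ∑ i ∈ Finset.range N, (N:ℝ) / (((i:ℝ) + 1) * (|(N:ℝ) - (i + 1 : ℕ)| + 1)) ≤ 2 * (harmonic N : ℝ) := by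
    have hr : (harmonic N : ℝ) = ∑ i ∈ Finset.range N, 1 / ((N:ℝ) - i) := by
      rw [hH, ← Finset.sum_range_reflect]
      refine Finset.sum_congr rfl fun i hi => ?_
      have := Finset.mem_range.1 hi
      rw [Nat.sub_sub, Nat.cast_sub (by omega)]
      push_cast
      congr 1; ring
    rw [two_mul]
    nth_rw 1 [hH]
    rw [hr, ← Finset.sum_add_distrib]
    refine Finset.sum_le_sum fun i hi => ?_
    have h1 : (i:ℝ) + 1 ≤ N := by exact_mod_cast Finset.mem_range.1 hi
    have h0 : (0:ℝ) ≤ i := Nat.cast_nonneg i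
    rw [abs_of_nonneg (by push_cast; linarith)]
    push_cast
    have e : (N:ℝ) - (i + 1) + 1 = N - i := by ring
    rw [e]
    have hp : (0:ℝ) < N - i := by linarith
    rw [div_add_div _ _ (by positivity) hp.ne']
    gcongr
    linarith
  have a2 : ∑ j ∈ Finset.range N, (N:ℝ) / ((((N + j : ℕ):ℝ) + 1) * (|(N:ℝ) - (N + j + 1 : ℕ)| + 1)) ≤ (harmonic N : ℝ) := by
    rw [hH]
    refine Finset.sum_le_sum fun i hi => ?_
    have h0 : (0:ℝ) ≤ i := Nat.cast_nonneg i
    rw [abs_of_nonpos (by push_cast; linarith)]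
    push_cast
    rw [div_le_div_iff₀ (by nlinarith) (by positivity)]
    nlinarith [mul_nonneg h0 h0]
  have a3 : ∀ K : ℕ, ∑ j ∈ Finset.range K, (N:ℝ) / ((((N + N + j : ℕ):ℝ) + 1) * (|(N:ℝ) - (N + N + j + 1 : ℕ)| + 1)) ≤ 1 - N / ((N:ℝ) + K) := by
    intro K
    induction K with
    | zero =>
      have : (N:ℝ) ≠ 0 := by positivity
      simp [this]
    | succ K ih =>
      rw [Finset.sum_range_succ]
      have h0 : (0:ℝ) ≤ K := Nat.cast_nonneg K
      have : (N:ℝ) / ((((N + N + K : ℕ):ℝ) + 1) * (|(N:ℝ) - (N + N + K + 1 : ℕ)| + 1)) ≤ N / ((N:ℝ) + K) - N / ((N:ℝ) + (K+1 : ℕ)) := by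
        rw [abs_of_nonpos (by push_cast; linarith)]
        push_cast
        rw [div_sub_div _ _ (by positivity) (by positivity)]
        have e : (N:ℝ) * (N + (K + 1)) - (N + K) * N = N := by ring
        rw [e]
        apply div_le_div_of_nonneg_left (by positivity) (by positivity)
        apply mul_le_mul <;> nlinarith
      linarith
  have a3' := a3 K
  have : (0:ℝ) ≤ N / ((N:ℝ) + K) := by positivity
  linarith

noncomputable def ww (θ : ℝ) (m : ℕ) : ℂ := (1 - Complex.exp (-(m * θ * Complex.I))) / m

lemma ww_norm (θ : ℝ) (m : ℕ) : ‖ww θ m‖ ^ 2 ≤ 4 / (m:ℝ)^2 := by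
  unfold ww
  rw [norm_div, _root_.div_pow, Complex.norm_natCast]
  have h : ‖1 - Complex.exp (-(m * θ * Complex.I))‖ ≤ 2 := by
    refine (norm_sub_le _ _).trans ?_
    have : ‖Complex.exp (-(m * θ * Complex.I))‖ = 1 := by
      rw [show (-(m * θ * Complex.I) : ℂ) = ((-(m * θ) : ℝ) : ℂ) * Complex.I by push_cast; ring]
      exact Complex.norm_exp_ofReal_mul_I _
    rw [this]; norm_num
  gcongr
  nlinarith [norm_nonneg (1 - Complex.exp (-(m * θ * Complex.I)))]

/-- the truncated series. -/
noncomputable def ZZ {N : ℕ} (θ : ℝ) (K : ℕ) (M : Matrix (Fin N) (Fin N) ℂ) : ℂ :=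
  ∑ i ∈ Finset.range K, ww θ (i+1) * pp (i+1) M

variable {N : ℕ} {ℙ : Measure (Matrix.unitaryGroup (Fin N) ℂ)} [IsProbabilityMeasure ℙ] [ℙ.IsHaarMeasure]

lemma ZZ_cont (θ : ℝ) (K : ℕ) : Continuous (ZZ (N := N) θ K) := by
  have cp := pp_cont (N := N)
  unfold ZZ
  fun_prop

lemma ZZ_sq (θ : ℝ) (K : ℕ) : ∫ U : Matrix.unitaryGroup (Fin N) ℂ, ZZ θ K (U : Matrix (Fin N) (Fin N) ℂ) * ZZ θ K (U : Matrix (Fin N) (Fin N) ℂ) ∂ℙ = 0 := by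
  have cp := pp_cont (N := N)
  simp only [ZZ, Finset.sum_mul_sum]
  rw [integral_finsetSum _ (fun i _ => integrable_cont (by fun_prop))]
  refine Finset.sum_eq_zero fun i _ => ?_
  rw [integral_finsetSum _ (fun i _ => integrable_cont (by fun_prop))]
  refine Finset.sum_eq_zero fun j _ => ?_
  rw [integral_congr_ae (Eventually.of_forall fun U => mul_mul_mul_comm _ _ _ _)]
  rw [integral_const_mul, orth_pp' _ _ (by omega), mul_zero]

lemma ZZ_norm (θ : ℝ) (K : ℕ) : ∫ U : Matrix.unitaryGroup (Fin N) ℂ, ‖ZZ θ K (U : Matrix (Fin N) (Fin N) ℂ)‖ ^ 2 ∂ℙ =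
    ∑ i ∈ Finset.range K, ‖ww θ (i+1)‖^2 * ∫ U : Matrix.unitaryGroup (Fin N) ℂ, ‖pp (i+1) (U : Matrix (Fin N) (Fin N) ℂ)‖ ^ 2 ∂ℙ := by
  have cp := pp_cont (N := N)
  have : ((∫ U : Matrix.unitaryGroup (Fin N) ℂ, ‖ZZ θ K (U : Matrix (Fin N) (Fin N) ℂ)‖ ^ 2 ∂ℙ : ℝ) : ℂ) = ∑ i ∈ Finset.range K, ((‖ww θ (i+1)‖^2 : ℝ) : ℂ) * ((∫ U : Matrix.unitaryGroup (Fin N) ℂ, ‖pp (i+1) (U : Matrix (Fin N) (Fin N) ℂ)‖ ^ 2 ∂ℙ : ℝ) : ℂ) := by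
    rw [← int_norm_sq]
    simp only [ZZ, star_sum, Finset.sum_mul_sum, star_mul']
    rw [integral_finsetSum _ (fun i _ => integrable_cont (by fun_prop))]
    refine Finset.sum_congr rfl fun i hi => ?_
    rw [integral_finsetSum _ (fun i _ => integrable_cont (by fun_prop))]
    rw [Finset.sum_eq_single_of_mem i hi]
    · rw [integral_congr_ae (Eventually.of_forall fun U => mul_mul_mul_comm _ _ _ _)]
      rw [integral_const_mul, int_norm_sq]
      congr 1
      simp [Complex.mul_conj']
    · intro j _ hj
      rw [integral_congr_ae (Eventually.of_forall fun U => mul_mul_mul_comm _ _ _ _)]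
      rw [integral_const_mul, orth_pp _ _ (by omega), mul_zero]
  exact_mod_cast this

lemma ZZ_im (hN : 1 ≤ N) (θ : ℝ) (K : ℕ) :
    ∫ U : Matrix.unitaryGroup (Fin N) ℂ, ((1 / π) * (ZZ θ K (U : Matrix (Fin N) (Fin N) ℂ)).im) ^ 2 ∂ℙ ≤ Real.log (Real.exp 1 * N) := by
  have cZ := ZZ_cont (N := N) θ K
  have h1 : ∫ U : Matrix.unitaryGroup (Fin N) ℂ, (ZZ θ K (U : Matrix (Fin N) (Fin N) ℂ)).im ^ 2 ∂ℙ =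
      (1/2) * ∫ U : Matrix.unitaryGroup (Fin N) ℂ, ‖ZZ θ K (U : Matrix (Fin N) (Fin N) ℂ)‖ ^ 2 ∂ℙ := by
    have e : ∀ z : ℂ, z.im ^ 2 = (1/2) * ‖z‖^2 - (1/2) * (z * z).re := by
      intro z
      rw [← Complex.normSq_eq_norm_sq, Complex.normSq_apply, Complex.mul_re]; ring
    simp only [e]
    rw [integral_sub, integral_const_mul, integral_const_mul]
    · have h2 := congrArg Complex.re (ZZ_sq (ℙ := ℙ) θ K)
      have h3 := integral_re (μ := ℙ) (𝕜 := ℂ) (f := fun U : Matrix.unitaryGroup (Fin N) ℂ => ZZ θ K (U : Matrix (Fin N) (Fin N) ℂ) * ZZ θ K (U : Matrix (Fin N) (Fin N) ℂ)) (integrable_cont (by fun_prop))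
      simp only [RCLike.re_to_complex] at h3
      rw [h3, h2]; simp
    · exact integrable_cont (by fun_prop)
    · exact integrable_cont (by fun_prop)
  have h2 : ∫ U : Matrix.unitaryGroup (Fin N) ℂ, ‖ZZ θ K (U : Matrix (Fin N) (Fin N) ℂ)‖ ^ 2 ∂ℙ ≤
      4 * (4 * (harmonic N : ℝ)) := by
    rw [ZZ_norm]
    refine le_trans ?_ (mul_le_mul_of_nonneg_left (harm_bound N hN K) (by norm_num))
    rw [Finset.mul_sum]
    refine Finset.sum_le_sum fun i _ => ?_
    have hp := pp_sq (ℙ := ℙ) (i+1) (by omega)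
    have hw := ww_norm θ (i+1)
    have hpos : (0:ℝ) < |(N:ℝ) - (i + 1 : ℕ)| + 1 := by positivity
    rw [← le_div_iff₀' hpos] at hp
    refine (mul_le_mul hw hp (integral_nonneg fun U => by positivity) (by positivity)).trans (le_of_eq ?_)
    push_cast
    field_simp
  have h3 : (harmonic N : ℝ) ≤ 1 + Real.log N := harmonic_le_one_add_log N
  have hlog : Real.log (Real.exp 1 * N) = 1 + Real.log N := by
    rw [Real.log_mul (Real.exp_ne_zero _) (by positivity), Real.log_exp]
  rw [hlog]
  simp only [mul_pow]
  rw [integral_const_mul, h1]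
  have hpi : (1/π)^2 ≤ 1/8 := by
    rw [_root_.div_pow, one_pow]
    apply one_div_le_one_div_of_le (by norm_num)
    nlinarith [Real.pi_gt_three]
  have hn : 0 ≤ ∫ U : Matrix.unitaryGroup (Fin N) ℂ, ‖ZZ θ K (U : Matrix (Fin N) (Fin N) ℂ)‖ ^ 2 ∂ℙ := integral_nonneg fun U => by positivity
  calc _ ≤ (1/8) * (1 / 2 * ∫ U : Matrix.unitaryGroup (Fin N) ℂ, ‖ZZ θ K (U : Matrix (Fin N) (Fin N) ℂ)‖ ^ 2 ∂ℙ) := by gcongr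
    _ ≤ _ := by linarith

end Bd
end CUE

namespace CUE
open Matrix

section Pt
open Topology

noncomputable def LL (K : ℕ) (z : ℂ) : ℂ := ∑ i ∈ Finset.range K, z ^ (i+1) / ((i+1 : ℕ) : ℂ)

lemma LL_tendsto (z : ℂ) (hz : ‖z‖ = 1) (hz1 : z ≠ 1) :
    Tendsto (fun K => LL K z) atTop (𝓝 (-Complex.log (1 - z))) := by
  have hb : ∀ n, ‖∑ i ∈ Finset.range n, z ^ (i+1)‖ ≤ 2 / ‖z - 1‖ := by
    intro n
    have : ∑ i ∈ Finset.range n, z ^ (i+1) = z * ((z ^ n - 1) / (z - 1)) := by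
      rw [← geom_sum_eq hz1, Finset.mul_sum]
      exact Finset.sum_congr rfl fun i _ => pow_succ' z i
    rw [this, norm_mul, hz, one_mul, norm_div]
    gcongr
    refine (norm_sub_le _ _).trans ?_
    rw [norm_pow, hz]; norm_num
  have hc := Antitone.cauchySeq_series_mul_of_tendsto_zero_of_bounded (f := fun n : ℕ => 1 / ((n:ℝ) + 1))
    (z := fun i => z ^ (i+1)) (fun a b hab => by
      have : (a:ℝ) ≤ b := by exact_mod_cast hab
      show 1 / ((b:ℝ) + 1) ≤ 1 / ((a:ℝ) + 1)
      gcongr) tendsto_one_div_add_atTop_nhds_zero_nat hb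
  obtain ⟨l, hl⟩ := cauchySeq_tendsto_of_complete hc
  have hl' : Tendsto (fun K => LL K z) atTop (𝓝 l) := by
    refine hl.congr fun K => ?_
    unfold LL
    refine Finset.sum_congr rfl fun i _ => ?_
    rw [Complex.real_smul]; push_cast; ring
  have hs : Tendsto (fun n => ∑ i ∈ Finset.range n, z ^ i / (i : ℂ)) atTop (𝓝 l) := by
    rw [← tendsto_add_atTop_iff_nat 1]
    refine hl'.congr fun K => ?_
    rw [Finset.sum_range_succ']
    simp [LL]
  have hab := Complex.tendsto_tsum_powerSeries_nhdsWithin_lt hs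
  rw [tendsto_map'_iff] at hab
  have hre : 0 < (1 - z).re := by
    have h1 : z.re ≤ 1 := by rw [← hz]; exact Complex.re_le_norm z
    have h2 : z.re ≠ 1 := by
      intro h
      have h3 : z.re * z.re + z.im * z.im = 1 := by
        rw [← Complex.normSq_apply, Complex.normSq_eq_norm_sq, hz]; norm_num
      have h4 : z.im = 0 := by rw [h] at h3; nlinarith
      exact hz1 (Complex.ext (by simpa using h) (by simpa using h4))
    have := lt_of_le_of_ne h1 h2
    simp; exact this
  have hlog : Tendsto (fun x : ℝ => -Complex.log (1 - z * x)) (𝓝[<] 1) (𝓝 (-Complex.log (1 - z))) := by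
    have hcont : ContinuousAt (fun x : ℝ => -Complex.log (1 - z * x)) 1 := by
      refine ContinuousAt.neg (ContinuousAt.clog (by fun_prop) ?_)
      left; simpa using hre
    have := hcont.tendsto.mono_left (nhdsWithin_le_nhds (s := Set.Iio 1))
    simpa using this
  have heq : ∀ᶠ x : ℝ in 𝓝[<] 1, ∑' n : ℕ, z ^ n / (n : ℂ) * (x : ℂ) ^ n = -Complex.log (1 - z * x) := by
    have : Set.Ioo (0:ℝ) 1 ∈ 𝓝[<] (1:ℝ) := Ioo_mem_nhdsLT (by norm_num)
    filter_upwards [this] with x hx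
    have hn : ‖z * x‖ < 1 := by
      rw [norm_mul, hz, one_mul, Complex.norm_real, Real.norm_eq_abs, abs_of_pos hx.1]; exact hx.2
    rw [← (Complex.hasSum_taylorSeries_neg_log hn).tsum_eq]
    exact tsum_congr fun n => by rw [mul_pow]; ring
  have huniq : l = -Complex.log (1 - z) :=
    tendsto_nhds_unique (hab.congr' (by filter_upwards [heq] with x hx using hx)) hlog
  rw [← huniq]; exact hl'

lemma log_im (φ : ℝ) (h0 : 0 < φ) (h1 : φ < 2 * π) :
    (-Complex.log (1 - Complex.exp (φ * Complex.I))).im = (π - φ) / 2 := by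
  rw [Complex.neg_im, Complex.log_im]
  have hs : 0 < 2 * Real.sin (φ / 2) := by
    have := Real.sin_pos_of_pos_of_lt_pi (x := φ/2) (by linarith) (by linarith)
    linarith
  have e : 1 - Complex.exp (φ * Complex.I) = ((2 * Real.sin (φ/2) : ℝ) : ℂ) * (Complex.cos (((φ - π)/2 : ℝ) : ℂ) + Complex.sin (((φ - π)/2 : ℝ) : ℂ) * Complex.I) := by
    have e2 : (φ - π)/2 = φ/2 - π/2 := by ring
    rw [e2, ← Complex.ofReal_cos, ← Complex.ofReal_sin, Real.cos_sub_pi_div_two, Real.sin_sub_pi_div_two, Complex.exp_mul_I,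
      ← Complex.ofReal_cos, ← Complex.ofReal_sin]
    have c1 : Real.cos φ = 1 - 2 * Real.sin (φ/2) ^ 2 := by
      have := Real.cos_two_mul (φ/2); rw [show 2 * (φ/2) = φ by ring] at this
      have := Real.sin_sq_add_cos_sq (φ/2); nlinarith
    have c2 : Real.sin φ = 2 * Real.sin (φ/2) * Real.cos (φ/2) := by
      have := Real.sin_two_mul (φ/2); rwa [show 2 * (φ/2) = φ by ring] at this
    rw [c1, c2]
    push_cast
    ring
  rw [e, Complex.arg_mul_cos_add_sin_mul_I hs ⟨by linarith [Real.pi_pos], by linarith [Real.pi_pos]⟩]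
  ring

noncomputable def ang (z : ℂ) : ℝ := if 0 ≤ Complex.arg z then Complex.arg z else Complex.arg z + 2 * π

lemma ang_nonneg (z : ℂ) : 0 ≤ ang z := by
  unfold ang; split_ifs with h
  · exact h
  · linarith [Complex.neg_pi_lt_arg z, Real.pi_pos]

lemma ang_lt (z : ℂ) : ang z < 2 * π := by
  unfold ang; split_ifs with h
  · linarith [Complex.arg_le_pi z, Real.pi_pos]
  · linarith [Complex.neg_pi_lt_arg z, Real.pi_pos]

lemma exp_ang (z : ℂ) (hz : ‖z‖ = 1) : Complex.exp (ang z * Complex.I) = z := by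
  have h : Complex.exp (Complex.arg z * Complex.I) = z := by
    have := Complex.norm_mul_exp_arg_mul_I z
    rwa [hz, Complex.ofReal_one, one_mul] at this
  unfold ang; split_ifs
  · exact h
  · push_cast
    rw [add_mul, Complex.exp_add, h, Complex.exp_two_pi_mul_I, mul_one]

open Classical in
lemma LL_diff (θ : ℝ) (hθ : θ ∈ Set.Icc 0 (2 * π)) (z : ℂ) (hz : ‖z‖ = 1) (hz1 : z ≠ 1)
    (hz2 : z ≠ Complex.exp (θ * Complex.I)) :
    Tendsto (fun K => (1 / π) * (LL K z - LL K (Complex.exp (-(θ * Complex.I)) * z)).im) atTop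
      (𝓝 ((if ang z ∈ Set.Icc 0 θ then 1 else 0) - θ / (2 * π))) := by
  have hpi := Real.pi_pos
  set φ := ang z with hφ
  have hexp := exp_ang z hz
  rw [← hφ] at hexp
  have hφ0 : 0 < φ := lt_of_le_of_ne (ang_nonneg z) (by
    intro h; rw [← h] at hexp; apply hz1; rw [← hexp]; simp)
  have hφ1 : φ < 2 * π := ang_lt z
  have hne : φ ≠ θ := by intro h; apply hz2; rw [← h, hexp]
  have t1 := LL_tendsto z hz hz1
  set z' := Complex.exp (-(θ * Complex.I)) * z with hz'
  have hz'n : ‖z'‖ = 1 := by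
    rw [hz', norm_mul, hz, mul_one, show (-(θ * Complex.I) : ℂ) = ((-θ : ℝ) : ℂ) * Complex.I by push_cast; ring]
    exact Complex.norm_exp_ofReal_mul_I _
  have hz'1 : z' ≠ 1 := by
    intro h
    apply hz2
    rw [hz', Complex.exp_neg] at h
    field_simp at h
    exact h
  have t2 := LL_tendsto z' hz'n hz'1
  have l1 : (-Complex.log (1 - z)).im = (π - φ)/2 := by
    rw [← log_im φ hφ0 hφ1, hexp]
  have t3 : Tendsto (fun K => (1 / π) * (LL K z - LL K z').im) atTop (𝓝 ((1/π) * (-Complex.log (1 - z) - -Complex.log (1 - z')).im)) :=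
    ((Complex.continuous_im.tendsto _).comp (t1.sub t2)).const_mul _
  have hez : z' = Complex.exp (((φ - θ : ℝ) : ℂ) * Complex.I) := by
    rw [hz', ← hexp, ← Complex.exp_add]; congr 1; push_cast; ring
  convert! t3 using 2
  rw [Complex.sub_im, l1]
  rcases lt_or_gt_of_ne hne with h | h
  · have : z' = Complex.exp (((φ - θ + 2 * π : ℝ) : ℂ) * Complex.I) := by
      rw [hez]; push_cast; rw [add_mul, Complex.exp_add _ (2 * (π:ℂ) * Complex.I), Complex.exp_two_pi_mul_I, mul_one]
    rw [this, log_im _ (by linarith [hθ.2]) (by linarith), if_pos ⟨hφ0.le, h.le⟩]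
    field_simp
    ring
  · rw [hez, log_im _ (by linarith) (by linarith [hθ.1]), if_neg (fun hh => absurd hh.2 (not_le.2 h))]
    field_simp
    ring

variable {N : ℕ}

open scoped ComplexOrder in
lemma root_norm (U : Matrix (Fin N) (Fin N) ℂ) (hU : U ∈ Matrix.unitaryGroup (Fin N) ℂ) (z : ℂ)
    (hz : z ∈ U.charpoly.roots) : ‖z‖ = 1 := by
  have h1 : U.charpoly.eval z = 0 := (Polynomial.mem_roots'.1 hz).2
  rw [Matrix.eval_charpoly, ← Matrix.exists_mulVec_eq_zero_iff] at h1
  obtain ⟨v, hv, h⟩ := h1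
  have hUv : U *ᵥ v = z • v := by
    rw [Matrix.sub_mulVec, sub_eq_zero] at h
    rw [← h]; ext i; simp [Matrix.mulVec_diagonal]
  have h2 : star (U *ᵥ v) ⬝ᵥ (U *ᵥ v) = star v ⬝ᵥ v := by
    rw [Matrix.star_mulVec, ← Matrix.dotProduct_mulVec, Matrix.mulVec_mulVec, ← Matrix.star_eq_conjTranspose,
      Matrix.mem_unitaryGroup_iff'.1 hU, Matrix.one_mulVec]
  rw [hUv, star_smul, smul_dotProduct, dotProduct_smul, smul_eq_mul, smul_eq_mul, ← mul_assoc] at h2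
  have h3 : star v ⬝ᵥ v ≠ 0 := by
    intro h0; exact hv (dotProduct_star_self_eq_zero.1 h0)
  have h4 : star z * z = 1 := mul_right_cancel₀ h3 (by rw [h2, one_mul])
  rw [RCLike.star_def, Complex.conj_mul'] at h4
  have h5 : ‖z‖ ^ 2 = 1 := by exact_mod_cast h4
  nlinarith [norm_nonneg z]

open Classical in
lemma count_tendsto (θ : ℝ) (hθ : θ ∈ Set.Icc 0 (2 * π)) (U : Matrix.unitaryGroup (Fin N) ℂ)
    (h1 : (1:ℂ) ∉ (U : Matrix (Fin N) (Fin N) ℂ).charpoly.roots)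
    (h2 : Complex.exp (θ * Complex.I) ∉ (U : Matrix (Fin N) (Fin N) ℂ).charpoly.roots) :
    Tendsto (fun K => (1 / π) * (ZZ θ K (U : Matrix (Fin N) (Fin N) ℂ)).im) atTop
      (𝓝 ((countFun N U θ : ℝ) - N * (θ / (2 * π)))) := by
  obtain ⟨z, hz⟩ := exists_enum (U : Matrix (Fin N) (Fin N) ℂ)
  have hmem : ∀ i, z i ∈ (U : Matrix (Fin N) (Fin N) ℂ).charpoly.roots := by
    intro i; rw [hz]; exact Multiset.mem_map_of_mem z (Finset.mem_univ_val i)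
  have hpp : ∀ k, pp k (U : Matrix (Fin N) (Fin N) ℂ) = ∑ i, z i ^ k := by
    intro k; rw [pp_eq, hz, Multiset.map_map]; rfl
  have hZ : ∀ K, ZZ θ K (U : Matrix (Fin N) (Fin N) ℂ) = ∑ i, (LL K (z i) - LL K (Complex.exp (-(θ * Complex.I)) * z i)) := by
    intro K
    simp only [ZZ, LL, hpp, Finset.mul_sum]
    rw [Finset.sum_comm]
    refine Finset.sum_congr rfl fun i _ => ?_
    rw [← Finset.sum_sub_distrib]
    refine Finset.sum_congr rfl fun k _ => ?_
    have : Complex.exp (-(((k+1:ℕ):ℂ) * θ * Complex.I)) = Complex.exp (-(θ * Complex.I)) ^ (k+1) := by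
      rw [← Complex.exp_nat_mul]; congr 1; ring
    rw [ww, this, mul_pow]
    ring
  have hcount : (countFun N U θ : ℝ) = ∑ i, (if ang (z i) ∈ Set.Icc 0 θ then (1:ℝ) else 0) := by
    unfold countFun countAngles eigenAngles
    rw [hz, Multiset.map_map, Multiset.filter_map, Multiset.card_map]
    rw [Finset.sum_boole, Finset.card_def, Finset.filter_val]
    congr!
  have hlim := tendsto_finsetSum Finset.univ (fun i _ => LL_diff θ hθ (z i) (root_norm _ U.2 _ (hmem i))
    (fun h => h1 (h ▸ hmem i)) (fun h => h2 (h ▸ hmem i)))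
  convert! hlim using 2
  · rw [hZ, Complex.im_sum, Finset.mul_sum]
  · rw [hcount, Finset.sum_sub_distrib]; simp

end Pt
end CUE

namespace CUE
open Matrix

section Null
open Topology ENNReal
variable {N : ℕ} {ℙ : Measure (Matrix.unitaryGroup (Fin N) ℂ)} [IsProbabilityMeasure ℙ] [ℙ.IsHaarMeasure]

/-- unitary matrices having `ω` as an eigenvalue -/
def EV (N : ℕ) (ω : ℂ) : Set (Matrix.unitaryGroup (Fin N) ℂ) :=
  {U | ω ∈ (U : Matrix (Fin N) (Fin N) ℂ).charpoly.roots}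

lemma mem_EV (ω : ℂ) (U : Matrix.unitaryGroup (Fin N) ℂ) :
    U ∈ EV N ω ↔ (ω • (1 : Matrix (Fin N) (Fin N) ℂ) - U).det = 0 := by
  unfold EV
  rw [Set.mem_ofPred_eq, Polynomial.mem_roots', Polynomial.IsRoot.def, Matrix.eval_charpoly, Matrix.smul_one_eq_diagonal]
  exact and_iff_right (Matrix.charpoly_monic _).ne_zero

lemma EV_meas (ω : ℂ) : MeasurableSet (EV N ω) := by
  have : EV N ω = {U : Matrix.unitaryGroup (Fin N) ℂ | (ω • (1 : Matrix (Fin N) (Fin N) ℂ) - (U : Matrix (Fin N) (Fin N) ℂ)).det = 0} := by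
    ext U; exact mem_EV ω U
  rw [this]
  exact (isClosed_eq (by fun_prop) continuous_const).measurableSet

lemma EV_rot (ω : ℂ) (hω : ‖ω‖ = 1) : ℙ (EV N ω) = ℙ (EV N 1) := by
  have hmem : ω • (1 : Matrix (Fin N) (Fin N) ℂ) ∈ Matrix.unitaryGroup (Fin N) ℂ := by
    rw [Matrix.mem_unitaryGroup_iff]
    rw [star_smul, star_one, smul_mul_smul_comm, mul_one, RCLike.star_def, Complex.mul_conj', hω]; simp
  rw [← measure_preimage_mul ℙ ⟨ω • (1 : Matrix (Fin N) (Fin N) ℂ), hmem⟩ (EV N ω)]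
  congr 1
  ext U
  have hω0 : ω ≠ 0 := by intro h; simp [h] at hω
  rw [Set.mem_preimage, mem_EV, mem_EV]
  have : (ω • (1 : Matrix (Fin N) (Fin N) ℂ) - ((⟨ω • (1 : Matrix (Fin N) (Fin N) ℂ), hmem⟩ * U : Matrix.unitaryGroup (Fin N) ℂ) : Matrix (Fin N) (Fin N) ℂ))
      = ω • ((1:ℂ) • (1 : Matrix (Fin N) (Fin N) ℂ) - U) := by
    rw [smul_sub, one_smul]; simp
  rw [this, Matrix.det_smul, mul_eq_zero]
  simp [hω0]

open Classical in
lemma EV_count (n : ℕ) (ω : ℕ → ℂ) (hinj : Set.InjOn ω (Finset.range n)) (U : Matrix.unitaryGroup (Fin N) ℂ) :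
    ∑ k ∈ Finset.range n, (EV N (ω k)).indicator (fun _ => (1:ℝ≥0∞)) U ≤ N := by
  simp only [Set.indicator_apply]
  rw [Finset.sum_boole]
  have hle : ((Finset.range n).filter (fun k => U ∈ EV N (ω k))).card ≤ N := by
    have h1 : (((Finset.range n).filter (fun k => U ∈ EV N (ω k))).image ω).card = ((Finset.range n).filter (fun k => U ∈ EV N (ω k))).card :=
      Finset.card_image_of_injOn (hinj.mono (by simp only [Finset.coe_subset]; exact Finset.filter_subset _ _))
    rw [← h1]
    have h2 : (((Finset.range n).filter (fun k => U ∈ EV N (ω k))).image ω) ⊆ (U : Matrix (Fin N) (Fin N) ℂ).charpoly.roots.toFinset := by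
      intro x hx
      obtain ⟨k, hk, rfl⟩ := Finset.mem_image.1 hx
      exact Multiset.mem_toFinset.2 (Finset.mem_filter.1 hk).2
    refine (Finset.card_le_card h2).trans ((Multiset.toFinset_card_le _).trans ?_)
    rw [card_roots]
  exact_mod_cast hle

lemma EV_one : ℙ (EV N 1) = 0 := by
  have key : ∀ n : ℕ, (n : ℝ≥0∞) * ℙ (EV N 1) ≤ N := by
    intro n
    rcases Nat.eq_zero_or_pos n with rfl | hn
    · simp
    have hζ := Complex.isPrimitiveRoot_exp n hn.ne'
    set ζ := Complex.exp (2 * ↑Real.pi * Complex.I / ↑n)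
    have hinj : Set.InjOn (fun k => ζ ^ k) (Finset.range n) := by
      intro i hi j hj hij
      exact hζ.pow_inj (by simpa using hi) (by simpa using hj) hij
    calc (n : ℝ≥0∞) * ℙ (EV N 1) = ∑ k ∈ Finset.range n, ℙ (EV N (ζ ^ k)) := by
          rw [Finset.sum_congr rfl (fun k _ => EV_rot (ζ ^ k) (by rw [norm_pow, hζ.norm'_eq_one hn.ne', one_pow]))]
          simp
      _ = ∫⁻ U, ∑ k ∈ Finset.range n, (EV N (ζ ^ k)).indicator (fun _ => (1:ℝ≥0∞)) U ∂ℙ := by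
          rw [lintegral_finsetSum _ (fun k _ => measurable_const.indicator (EV_meas _))]
          refine Finset.sum_congr rfl fun k _ => ?_
          rw [lintegral_indicator (EV_meas _)]; simp
      _ ≤ ∫⁻ U, (N : ℝ≥0∞) ∂ℙ := lintegral_mono fun U => EV_count n _ hinj U
      _ = N := by simp
  by_contra h
  obtain ⟨n, hn⟩ := ENNReal.exists_nat_mul_gt h (ENNReal.natCast_ne_top N)
  exact absurd (key n) (not_le.2 hn)

lemma EV_null (ω : ℂ) (hω : ‖ω‖ = 1) : ℙ (EV N ω) = 0 := by rw [EV_rot ω hω, EV_one]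

lemma count_ae (θ : ℝ) (hθ : θ ∈ Set.Icc 0 (2 * π)) :
    ∀ᵐ U : Matrix.unitaryGroup (Fin N) ℂ ∂ℙ, Tendsto (fun K => (1 / π) * (ZZ θ K (U : Matrix (Fin N) (Fin N) ℂ)).im) atTop
      (𝓝 ((countFun N U θ : ℝ) - N * (θ / (2 * π)))) := by
  have h1 : ∀ᵐ U ∂ℙ, U ∉ EV N 1 := measure_eq_zero_iff_ae_notMem.1 (EV_null 1 (by simp))
  have h2 : ∀ᵐ U ∂ℙ, U ∉ EV N (Complex.exp (θ * Complex.I)) :=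
    measure_eq_zero_iff_ae_notMem.1 (EV_null _ (Complex.norm_exp_ofReal_mul_I θ))
  filter_upwards [h1, h2] with U hU1 hU2
  exact count_tendsto θ hθ U hU1 hU2

lemma main (hN : 1 ≤ N) (θ : ℝ) (hθ : θ ∈ Set.Icc 0 (2 * π)) :
    ProbabilityTheory.variance (fun U => (countFun N U θ : ℝ)) ℙ ≤ Real.log (Real.exp 1 * N) := by
  have hae := count_ae (ℙ := ℙ) θ hθ
  have cZ : ∀ K, Continuous (fun U : Matrix.unitaryGroup (Fin N) ℂ => (1 / π) * (ZZ θ K (U : Matrix (Fin N) (Fin N) ℂ)).im) := by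
    intro K
    have := ZZ_cont (N := N) θ K
    fun_prop
  set c := (N:ℝ) * (θ / (2 * π))
  set Y : Matrix.unitaryGroup (Fin N) ℂ → ℝ := fun U => (countFun N U θ : ℝ) - c with hY
  have hYm : AEStronglyMeasurable Y ℙ :=
    aestronglyMeasurable_of_tendsto_ae atTop (fun K => (cZ K).aestronglyMeasurable) hae
  have hXm : AEStronglyMeasurable (fun U => (countFun N U θ : ℝ)) ℙ := by
    have := hYm.add (aestronglyMeasurable_const (b := c))
    refine this.congr (Eventually.of_forall fun U => ?_)
    simp [hY]
  rw [← ProbabilityTheory.variance_sub_const hXm c]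
  refine (ProbabilityTheory.variance_le_expectation_sq hYm).trans ?_
  have hlog : 0 ≤ Real.log (Real.exp 1 * N) := by
    have h0 := ZZ_im (ℙ := ℙ) hN θ 0
    exact le_trans (integral_nonneg fun U => by positivity) h0
  rw [integral_eq_lintegral_of_nonneg_ae (f := Y ^ 2) (Eventually.of_forall fun U => sq_nonneg (Y U)) (hYm.pow 2)]
  refine ENNReal.toReal_le_of_le_ofReal hlog ?_
  have hlim : ∀ᵐ U ∂ℙ, ENNReal.ofReal ((Y ^ 2) U) =
      liminf (fun K => ENNReal.ofReal (((1 / π) * (ZZ θ K (U : Matrix (Fin N) (Fin N) ℂ)).im) ^ 2)) atTop := by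
    filter_upwards [hae] with U hU
    exact (ENNReal.tendsto_ofReal (hU.pow 2)).liminf_eq.symm
  rw [lintegral_congr_ae hlim]
  refine (lintegral_liminf_le (fun K => (ENNReal.continuous_ofReal.comp ((cZ K).pow 2)).measurable)).trans ?_
  refine liminf_le_of_frequently_le' (Frequently.of_forall fun K => ?_)
  simp only [Function.comp_apply]
  rw [← ofReal_integral_eq_lintegral_ofReal (integrable_cont ((cZ K).pow 2)) (Eventually.of_forall fun U => sq_nonneg _)]
  exact ENNReal.ofReal_le_ofReal (ZZ_im hN θ K)

end Null
end CUE

/-- For a Haar-distributed `N × N` unitary matrix and `θ ∈ [0, 2π]`, `Var 𝒩_θ ≤ log(eN)`. -/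
theorem variance_counting_function_le
    (N : ℕ) (hN : 1 ≤ N) (ℙ : Measure (Matrix.unitaryGroup (Fin N) ℂ))
    (hprob : IsProbabilityMeasure ℙ) (hhaar : ℙ.IsHaarMeasure)
    (θ : ℝ) (hθ : θ ∈ Set.Icc 0 (2 * π)) :
    ProbabilityTheory.variance (fun U => (countFun N U θ : ℝ)) ℙ ≤
      Real.log (Real.exp 1 * N) := by
  exact CUE.main hN θ hθ
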